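/- arXiv:2504.18674 — 5 statements merged into one kernel-verified Lean document; each statement's English description precedes it below -/
import Mathlib

section
/- Let h ≥ 1 be an integer, and for i ∈ {1,…,h} let ν_i ∈ (0,1), c_i > 0 and m_i ∈ ℝ. Then for every (x_1,…,x_h) ∈ ℝ^h, as an identity in [0,∞], sup_{(θ_1,…,θ_h) ∈ ℝ^h} { Σ_{i=1}^h θ_i x_i − Σ_{i=1}^h (c_i m_i θ_i · 1{θ_i m_i ≥ 0})^{1/ν_i} } = Σ_{i=1}^h V_{ν_i, c_i m_i}(x_i). (This is the explicit expression of the moderate-deviation rate function of Proposition 4.1 in the case m ≠ 0, when ν_0 < min{ν_1,…,ν_h}.) -/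
open Set Filter
open scoped ENNReal

/-- `V_{ν,m} : ℝ → [0,∞]`: for `m ≠ 0`,
`V_{ν,m}(x) = (ν^{ν/(1-ν)} - ν^{1/(1-ν)}) (x/m)^{1/(1-ν)}` if `x/m ≥ 0` and `+∞` if `x/m < 0`;
for `m = 0`, `V_{ν,0}(0) = 0` and `V_{ν,0}(x) = +∞` for `x ≠ 0`. -/
noncomputable def Vfun (ν m x : ℝ) : EReal :=
  if m = 0 then (if x = 0 then (0 : EReal) else ⊤)
  else if 0 ≤ x / m then
    (((ν ^ (ν / (1 - ν)) - ν ^ (1 / (1 - ν))) * (x / m) ^ (1 / (1 - ν)) : ℝ) : EReal)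
  else ⊤

/-!
The objective is separable, so the supremum over `θ` is the sum of the one-dimensional convex
conjugates of `t ↦ (c m t)⁺ ^ (1 / ν)`. If `c m ≠ 0`, rescaling `t` by `c m / ν ^ ν` turns this
function into `t ↦ t⁺ ^ p / p` with `p = 1 / ν`. With `q` the Hölder conjugate of `p`, the conjugate
of the latter is `r ^ q / q` for `r ≥ 0`, by Young's inequality and its equality case, and `+∞` for
`r < 0`, because the function vanishes on the negative half-line.
-/

lemma iSup_sum_eq_sum_iSup {ι : Type*} [Fintype ι] {α : ι → Type*} [∀ i, Nonempty (α i)]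
    (f : ∀ i, α i → EReal) : ⨆ θ : ∀ i, α i, ∑ i, f i (θ i) = ∑ i, ⨆ t, f i t := by
  classical
  refine le_antisymm (iSup_le fun θ ↦ Finset.sum_le_sum fun i _ ↦ le_iSup (f i) (θ i)) ?_
  suffices sum_iSup_le : ∀ s : Finset ι,
      ∑ i ∈ s, ⨆ t, f i t ≤ ⨆ θ : ∀ i, α i, ∑ i ∈ s, f i (θ i) from sum_iSup_le Finset.univ
  intro s
  induction s using Finset.induction_on with
  | empty => simp
  | insert a s ha ih =>
    rw [Finset.sum_insert ha]
    refine (add_le_add_right ih _).trans (EReal.add_le_of_forall_lt fun u hu v hv ↦ ?_)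
    obtain ⟨t, ht⟩ := lt_iSup_iff.1 hu
    obtain ⟨θ, hθ⟩ := lt_iSup_iff.1 hv
    have sum_update : ∑ i ∈ s, f i (Function.update θ a t i) = ∑ i ∈ s, f i (θ i) :=
      Finset.sum_congr rfl fun i hi ↦ by
        rw [Function.update_of_ne (ne_of_mem_of_not_mem hi ha)]
    refine le_iSup_of_le (Function.update θ a t) ?_
    rw [Finset.sum_insert ha, Function.update_self, sum_update]
    exact add_le_add ht.le hθ.le

/-- The convex (Fenchel–Legendre) conjugate `x ↦ sup_t (t x - f t)` of a function on the real line.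
It takes values in `EReal`, so that an unbounded supremum is `⊤`. -/
noncomputable def convexConjugate (f : ℝ → ℝ) (x : ℝ) : EReal :=
  ⨆ t : ℝ, ((t * x - f t : ℝ) : EReal)

lemma iSup_sum_sub_sum_eq_sum_convexConjugate {ι : Type*} [Fintype ι] (f : ι → ℝ → ℝ) (x : ι → ℝ) :
    (⨆ θ : ι → ℝ, (((∑ i, θ i * x i) - ∑ i, f i (θ i) : ℝ) : EReal))
      = ∑ i, convexConjugate (f i) (x i) := by
  simp only [convexConjugate]
  rw [← iSup_sum_eq_sum_iSup]
  refine iSup_congr fun θ ↦ ?_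
  rw [← Finset.sum_sub_distrib]
  exact map_sum (⟨⟨Real.toEReal, EReal.coe_zero⟩, EReal.coe_add⟩ : ℝ →+ EReal) _ _

lemma convexConjugate_comp_mul_left (f : ℝ → ℝ) {a : ℝ} (ha : a ≠ 0) (x : ℝ) :
    convexConjugate (fun t ↦ f (a * t)) x = convexConjugate f (x / a) := by
  refine Eq.trans (iSup_congr fun t ↦ ?_)
    ((mul_left_surjective₀ ha).iSup_comp fun y ↦ ((y * (x / a) - f y : ℝ) : EReal))
  rw [show a * t * (x / a) = t * x by field_simp]

lemma convexConjugate_eq_of_le_of_eq {f : ℝ → ℝ} {x v t : ℝ} (hle : ∀ s, s * x - f s ≤ v)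
    (heq : t * x - f t = v) : convexConjugate f x = v :=
  le_antisymm (iSup_le fun s ↦ EReal.coe_le_coe (hle s))
    (le_iSup_of_le t (EReal.coe_le_coe heq.ge))

lemma convexConjugate_eq_top_of_le_on_ray {f : ℝ → ℝ} {x u C : ℝ} (hux : 0 < u * x)
    (hf : ∀ s, 0 ≤ s → f (s * u) ≤ C) : convexConjugate f x = ⊤ := by
  refine (EReal.eq_top_iff_forall_lt _).2 fun B ↦ ?_
  have hs : 0 ≤ (|B + C| + 1) / (u * x) := by positivity
  refine lt_iSup_iff.2 ⟨(|B + C| + 1) / (u * x) * u, EReal.coe_lt_coe ?_⟩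
  have hlin : (|B + C| + 1) / (u * x) * u * x = |B + C| + 1 := by
    rw [mul_assoc, div_mul_cancel₀ _ hux.ne']
  linarith [hf _ hs, le_abs_self (B + C)]

lemma convexConjugate_zero (x : ℝ) :
    convexConjugate (fun _ ↦ 0) x = if x = 0 then 0 else ⊤ := by
  split_ifs with hx
  · simp [convexConjugate, hx]
  · exact convexConjugate_eq_top_of_le_on_ray (mul_self_pos.2 hx) fun _ _ ↦ le_rfl

section HolderConjugate

variable {p q r : ℝ}

lemma mul_sub_posPart_rpow_div_le (hpq : p.HolderConjugate q) (hr : 0 ≤ r) (t : ℝ) :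
    t * r - t⁺ ^ p / p ≤ r ^ q / q := by
  have young := Real.young_inequality_of_nonneg (posPart_nonneg t) hr hpq
  have ht : t * r ≤ t⁺ * r := mul_le_mul_of_nonneg_right (le_posPart t) hr
  linarith

lemma rpow_sub_one_mul_sub_posPart_rpow_div (hpq : p.HolderConjugate q) (hr : 0 ≤ r) :
    r ^ (q - 1) * r - (r ^ (q - 1))⁺ ^ p / p = r ^ q / q := by
  have hmul : r ^ (q - 1) * r = r ^ q := by
    rw [← Real.rpow_add_one' hr (by simpa using hpq.symm.ne_zero), sub_add_cancel]
  rw [posPart_of_nonneg (Real.rpow_nonneg hr _), ← Real.rpow_mul hr, hpq.symm.sub_one_mul_conj,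
    hmul, div_eq_mul_inv, div_eq_mul_inv, ← hpq.one_sub_inv]
  ring

lemma convexConjugate_posPart_rpow_div (hpq : p.HolderConjugate q) (r : ℝ) :
    convexConjugate (fun t ↦ t⁺ ^ p / p) r = if 0 ≤ r then ((r ^ q / q : ℝ) : EReal) else ⊤ := by
  split_ifs with hr
  · exact convexConjugate_eq_of_le_of_eq (mul_sub_posPart_rpow_div_le hpq hr)
      (rpow_sub_one_mul_sub_posPart_rpow_div hpq hr)
  · refine convexConjugate_eq_top_of_le_on_ray (u := -1) (C := 0) (by linarith) fun s hs ↦ ?_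
    rw [posPart_of_nonpos (by linarith), Real.zero_rpow hpq.ne_zero, zero_div]

end HolderConjugate

section PosPart

variable {R : Type*} [CommRing R] [LinearOrder R] [IsOrderedRing R]

lemma posPart_mul_of_nonneg {a : R} (ha : 0 ≤ a) (t : R) : (a * t)⁺ = a * t⁺ := by
  simp only [posPart_def, mul_max_of_nonneg _ _ ha, mul_zero]

lemma mul_ite_nonneg_eq_posPart {c : R} (hc : 0 ≤ c) (m t : R) :
    c * m * t * (if 0 ≤ t * m then 1 else 0) = (c * m * t)⁺ := by
  rw [mul_assoc c, posPart_mul_of_nonneg hc, posPart_eq_ite, mul_comm m t]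
  split_ifs <;> ring

end PosPart

section Exponent

variable {ν : ℝ}

lemma rpow_self_mul_rpow_one_div_div (hν₀ : 0 < ν) (hν₁ : ν < 1) {r : ℝ} (hr : 0 ≤ r) :
    (ν ^ ν * r) ^ (1 / (1 - ν)) / (1 / (1 - ν))
      = (ν ^ (ν / (1 - ν)) - ν ^ (1 / (1 - ν))) * r ^ (1 / (1 - ν)) := by
  have h1ν : 1 - ν ≠ 0 := (sub_pos.2 hν₁).ne'
  have hpow : ν ^ (1 / (1 - ν)) = ν ^ (ν / (1 - ν)) * ν := by
    rw [← Real.rpow_add_one hν₀.ne']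
    congr 1
    field_simp
    ring
  rw [Real.mul_rpow (by positivity) hr, ← Real.rpow_mul hν₀.le, mul_one_div, hpow]
  field_simp

lemma posPart_rpow_one_div_eq_div (hν₀ : 0 < ν) (t : ℝ) :
    t⁺ ^ (1 / ν) = ((ν ^ ν)⁻¹ * t)⁺ ^ (1 / ν) / (1 / ν) := by
  rw [posPart_mul_of_nonneg (by positivity), Real.mul_rpow (by positivity) (posPart_nonneg t),
    Real.inv_rpow (by positivity), ← Real.rpow_mul hν₀.le, mul_one_div_cancel hν₀.ne',
    Real.rpow_one]
  field_simp

lemma convexConjugate_posPart_rpow_one_div (hν₀ : 0 < ν) (hν₁ : ν < 1) (r : ℝ) :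
    convexConjugate (fun t ↦ t⁺ ^ (1 / ν)) r =
      if 0 ≤ r then
        (((ν ^ (ν / (1 - ν)) - ν ^ (1 / (1 - ν))) * r ^ (1 / (1 - ν)) : ℝ) : EReal)
      else ⊤ := by
  have hpq : (1 / ν).HolderConjugate (1 / (1 - ν)) :=
    Real.holderConjugate_one_div hν₀ (sub_pos.2 hν₁) (by ring)
  have hνν : 0 < ν ^ ν := Real.rpow_pos_of_pos hν₀ ν
  have hsign : 0 ≤ ν ^ ν * r ↔ 0 ≤ r := mul_nonneg_iff_of_pos_left hνν
  rw [funext (posPart_rpow_one_div_eq_div hν₀),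
    convexConjugate_comp_mul_left (fun y ↦ y⁺ ^ (1 / ν) / (1 / ν)) (inv_ne_zero hνν.ne'),
    div_inv_eq_mul, mul_comm r, convexConjugate_posPart_rpow_div hpq]
  simp only [hsign]
  exact ite_congr rfl (fun hr ↦ by rw [rpow_self_mul_rpow_one_div_div hν₀ hν₁ hr]) fun _ ↦ rfl

lemma convexConjugate_posPart_mul_rpow_one_div (hν₀ : 0 < ν) (hν₁ : ν < 1) (a x : ℝ) :
    convexConjugate (fun t ↦ (a * t)⁺ ^ (1 / ν)) x = Vfun ν a x := by
  by_cases ha : a = 0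
  · rw [Vfun, if_pos ha]
    simp only [ha, zero_mul, posPart_zero, Real.zero_rpow (one_div_ne_zero hν₀.ne')]
    exact convexConjugate_zero x
  · rw [Vfun, if_neg ha, convexConjugate_comp_mul_left (fun y ↦ y⁺ ^ (1 / ν)) ha]
    exact convexConjugate_posPart_rpow_one_div hν₀ hν₁ (x / a)

end Exponent

/-- Explicit moderate-deviation rate function, case `m ≠ 0`, `ν_0 < min ν_i`: for every
`x ∈ ℝ^h`, as an identity in `[0,∞]`,
`sup_θ {Σ_i θ_i x_i - Σ_i (c_i m_i θ_i 1{θ_i m_i ≥ 0})^{1/ν_i}} = Σ_i V_{ν_i, c_i m_i}(x_i)`. -/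
theorem stmt_6 (h : ℕ) (hh : 1 ≤ h) (ν c m : Fin h → ℝ)
    (hν : ∀ i, ν i ∈ Set.Ioo (0 : ℝ) 1) (hc : ∀ i, 0 < c i)
    (x : Fin h → ℝ) :
    (⨆ θ : Fin h → ℝ,
        (((∑ i, θ i * x i)
          - ∑ i, (c i * m i * θ i * (if 0 ≤ θ i * m i then 1 else 0)) ^ (1 / ν i) : ℝ) : EReal))
      = ∑ i, Vfun (ν i) (c i * m i) (x i) := by
  simp only [mul_ite_nonneg_eq_posPart (hc _).le]
  rw [iSup_sum_sub_sum_eq_sum_convexConjugate fun i t ↦ (c i * m i * t)⁺ ^ (1 / ν i)]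
  exact Finset.sum_congr rfl fun i _ ↦
    convexConjugate_posPart_mul_rpow_one_div (hν i).1 (hν i).2 (c i * m i) (x i)
end

section
/- Let h ≥ 1 be an integer, ν_0 ∈ (0,1), c_0 > 0, and m = (m_1,…,m_h) ∈ ℝ^h with m ≠ 0. Let A := { (x_1,…,x_h) ∈ ℝ^h : x_i m_i ≥ 0 for every i ∈ {1,…,h}, and x_j = 0 whenever m_j = 0 }. Then for every (x_1,…,x_h) ∈ ℝ^h, as an identity in [0,∞]: sup_{(θ_1,…,θ_h) ∈ ℝ^h} { Σ_{i=1}^h θ_i x_i − (c_0 Σ_{i=1}^h m_i θ_i · 1{θ_i m_i ≥ 0})^{1/ν_0} } equals max{ V_{ν_0, c_0 m_i}(x_i) : i ∈ {1,…,h} } if (x_1,…,x_h) ∈ A, and equals +∞ if (x_1,…,x_h) ∉ A. (This is Proposition 4.2, the explicit moderate-deviation rate function in the case ν_0 > max{ν_1,…,ν_h} with m ≠ 0.) -/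
open Set Filter
open scoped ENNReal

/-!
Absorb `c₀` into `m`, so that the penalty is `s ^ (1 / ν)` with `s = ∑ i, (m i * θ i)⁺`. The
supremum is then `⨆ i, V_{ν, m i} (x i)` for every `x`, and the set `A` is exactly where all these
terms are finite. For `≥`, restrict to `θ` supported on one coordinate. For `≤`, when all terms are
finite, `θ i * x i ≤ (m i * θ i)⁺ * (x i / m i)`, so `∑ i, θ i * x i ≤ s * a` with
`a = maxᵢ x i / m i`, and Young's inequality bounds `s * a - s ^ (1 / ν)` by `V` at the maximising
index.
-/

/-- The convex conjugate `a ↦ sup_{t ≥ 0} (t a - t^{1/ν})` of the power function `t ↦ t^{1/ν}` on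
the half-line, in closed form for `a ≥ 0` and `0 < ν < 1`. -/
noncomputable def rpowConj (ν a : ℝ) : ℝ :=
  (ν ^ (ν / (1 - ν)) - ν ^ (1 / (1 - ν))) * a ^ (1 / (1 - ν))

section RpowConj

variable {ν a t : ℝ}

lemma one_div_one_sub_eq_div_add_one (hν : ν < 1) : 1 / (1 - ν) = ν / (1 - ν) + 1 := by
  have : 1 - ν ≠ 0 := (sub_pos.2 hν).ne'
  field_simp
  ring

lemma rpowConj_zero (hν : ν < 1) : rpowConj ν 0 = 0 := by
  rw [rpowConj, Real.zero_rpow (one_div_pos.2 (sub_pos.2 hν)).ne', mul_zero]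

lemma rpowConj_eq (hν : ν ∈ Ioo 0 1) :
    rpowConj ν a = a ^ (1 / (1 - ν)) * ν ^ (ν / (1 - ν)) * (1 - ν) := by
  have hpow : ν ^ (1 / (1 - ν)) = ν ^ (ν / (1 - ν)) * ν := by
    rw [one_div_one_sub_eq_div_add_one hν.2, Real.rpow_add_one hν.1.ne']
  rw [rpowConj, hpow]
  ring

lemma mul_sub_rpow_le_rpowConj (hν : ν ∈ Ioo 0 1) (ht : 0 ≤ t) (ha : 0 ≤ a) :
    t * a - t ^ (1 / ν) ≤ rpowConj ν a := by
  obtain ⟨hν0, hν1⟩ := hν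
  have hconj : (1 / ν).HolderConjugate (1 / (1 - ν)) :=
    Real.holderConjugate_one_div hν0 (sub_pos.2 hν1) (by ring)
  have hpow : 0 < ν ^ ν := Real.rpow_pos_of_pos hν0 ν
  -- Rescaling by `ν ^ ν` gives `t ^ (1 / ν)` coefficient one in Young's inequality.
  have young := Real.young_inequality_of_nonneg
    (div_nonneg ht hpow.le) (mul_nonneg ha hpow.le) hconj
  have hleft : t / ν ^ ν * (a * ν ^ ν) = t * a := by field_simp
  have hfst : (t / ν ^ ν) ^ (1 / ν) / (1 / ν) = t ^ (1 / ν) := by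
    rw [Real.div_rpow ht hpow.le, ← Real.rpow_mul hν0.le, mul_one_div_cancel hν0.ne',
      Real.rpow_one]
    field_simp
  have hsnd : (a * ν ^ ν) ^ (1 / (1 - ν)) / (1 / (1 - ν)) = rpowConj ν a := by
    rw [Real.mul_rpow ha hpow.le, ← Real.rpow_mul hν0.le, mul_one_div, div_div_eq_mul_div, div_one,
      rpowConj_eq ⟨hν0, hν1⟩]
  linarith

lemma exists_mul_sub_rpow_eq_rpowConj (hν : ν ∈ Ioo 0 1) (ha : 0 ≤ a) :
    ∃ t, 0 ≤ t ∧ t * a - t ^ (1 / ν) = rpowConj ν a := by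
  obtain ⟨hν0, hν1⟩ := hν
  have : 0 < 1 - ν := sub_pos.2 hν1
  -- The critical point, where `a = t ^ (1 / ν - 1) / ν`.
  refine ⟨(ν * a) ^ (ν / (1 - ν)), by positivity, ?_⟩
  have hexp : ν / (1 - ν) * (1 / ν) = 1 / (1 - ν) := by field_simp
  have hpow : a ^ (1 / (1 - ν)) = a ^ (ν / (1 - ν)) * a := by
    rw [one_div_one_sub_eq_div_add_one hν1, Real.rpow_add_one' ha (by positivity)]
  rw [← Real.rpow_mul (by positivity), hexp, Real.mul_rpow hν0.le ha, Real.mul_rpow hν0.le ha,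
    rpowConj, hpow]
  ring

end RpowConj

section Vfun

variable {ν m x : ℝ}

lemma Vfun_ne_top_iff : Vfun ν m x ≠ ⊤ ↔ 0 ≤ x * m ∧ (m = 0 → x = 0) := by
  have hsign : 0 ≤ x / m ↔ 0 ≤ x * m := by rw [div_nonneg_iff, mul_nonneg_iff]
  unfold Vfun
  split_ifs with hm hx hdiv
  · simp [hx]
  · simp [hm, hx]
  · simp only [ne_eq, EReal.coe_ne_top, not_false_eq_true, hsign.1 hdiv, hm, false_imp_iff,
      and_self]
  · simp [hm, ← hsign, hdiv]

lemma Vfun_const_mul_ne_top_iff {c : ℝ} (hc : 0 < c) :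
    Vfun ν (c * m) x ≠ ⊤ ↔ 0 ≤ x * m ∧ (m = 0 → x = 0) := by
  rw [Vfun_ne_top_iff, mul_left_comm, mul_nonneg_iff_of_pos_left hc, mul_eq_zero_iff_left hc.ne']

lemma div_nonneg_of_Vfun_ne_top (hV : Vfun ν m x ≠ ⊤) : 0 ≤ x / m := by
  rw [div_nonneg_iff, ← mul_nonneg_iff]
  exact (Vfun_ne_top_iff.1 hV).1

lemma mul_div_of_Vfun_ne_top (hV : Vfun ν m x ≠ ⊤) : m * (x / m) = x :=
  mul_div_cancel_of_imp' (Vfun_ne_top_iff.1 hV).2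

lemma Vfun_eq_rpowConj (hν : ν < 1) (hV : Vfun ν m x ≠ ⊤) :
    Vfun ν m x = (rpowConj ν (x / m) : ℝ) := by
  by_cases hm : m = 0
  · have hx : x = 0 := (Vfun_ne_top_iff.1 hV).2 hm
    simp [Vfun, hm, hx, rpowConj_zero hν]
  · rw [Vfun, if_neg hm, if_pos (div_nonneg_of_Vfun_ne_top hV), rpowConj]

lemma ne_zero_and_mul_nonpos_of_Vfun_eq_top (hV : Vfun ν m x = ⊤) : x ≠ 0 ∧ m * x ≤ 0 := by
  have hdom : ¬(0 ≤ x * m ∧ (m = 0 → x = 0)) := fun h ↦ Vfun_ne_top_iff.2 h hV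
  constructor
  · rintro rfl
    simp at hdom
  · by_contra! hpos
    exact hdom ⟨by linarith, fun hm ↦ by simp [hm] at hpos⟩

lemma exists_lt_mul_sub_posPart_rpow_of_Vfun_eq_top (hν : 0 < ν) (hV : Vfun ν m x = ⊤) (y : ℝ) :
    ∃ t, y < t * x - (m * t)⁺ ^ (1 / ν) := by
  obtain ⟨hx, hmx⟩ := ne_zero_and_mul_nonpos_of_Vfun_eq_top hV
  -- The penalty vanishes along the ray spanned by `x`.
  let r := (|y| + 1) / x ^ 2
  have hpenalty : (m * (r * x))⁺ = 0 := by
    rw [posPart_eq_zero, mul_left_comm]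
    exact mul_nonpos_of_nonneg_of_nonpos (by positivity) hmx
  have hlinear : r * x * x = |y| + 1 := by
    simp only [r]
    field_simp
  refine ⟨r * x, ?_⟩
  rw [hpenalty, Real.zero_rpow (by positivity), hlinear]
  linarith [le_abs_self y]

lemma exists_mul_sub_posPart_rpow_eq_rpowConj (hν : ν ∈ Ioo 0 1) (hV : Vfun ν m x ≠ ⊤) :
    ∃ t, t * x - (m * t)⁺ ^ (1 / ν) = rpowConj ν (x / m) := by
  by_cases hm : m = 0
  · exact ⟨0, by simp [hm, rpowConj_zero hν.2, Real.zero_rpow (inv_pos.2 hν.1).ne']⟩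
  · obtain ⟨t, ht, heq⟩ := exists_mul_sub_rpow_eq_rpowConj hν (div_nonneg_of_Vfun_ne_top hV)
    refine ⟨t / m, ?_⟩
    rw [mul_div_cancel₀ t hm, posPart_of_nonneg ht, div_mul_eq_mul_div, mul_div_assoc, heq]

lemma Vfun_le_iSup_mul_sub_posPart_rpow (hν : ν ∈ Ioo 0 1) :
    Vfun ν m x ≤ ⨆ t : ℝ, ((t * x - (m * t)⁺ ^ (1 / ν) : ℝ) : EReal) := by
  by_cases hV : Vfun ν m x = ⊤
  · rw [hV, top_le_iff, EReal.eq_top_iff_forall_lt]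
    intro y
    obtain ⟨t, ht⟩ := exists_lt_mul_sub_posPart_rpow_of_Vfun_eq_top hν.1 hV y
    exact (EReal.coe_lt_coe_iff.2 ht).trans_le (le_iSup_of_le t le_rfl)
  · obtain ⟨t, ht⟩ := exists_mul_sub_posPart_rpow_eq_rpowConj hν hV
    rw [Vfun_eq_rpowConj hν.2 hV, ← ht]
    exact le_iSup_of_le t le_rfl

lemma mul_le_posPart_mul_div (hV : Vfun ν m x ≠ ⊤) (θ : ℝ) : θ * x ≤ (m * θ)⁺ * (x / m) :=
  calc θ * x = m * θ * (x / m) := by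
        rw [mul_right_comm, mul_div_of_Vfun_ne_top hV, mul_comm]
    _ ≤ (m * θ)⁺ * (x / m) :=
        mul_le_mul_of_nonneg_right (le_posPart _) (div_nonneg_of_Vfun_ne_top hV)

end Vfun

section Legendre

variable {ι : Type*} [Fintype ι] {ν : ℝ} {m x : ι → ℝ}

/-- The function of `θ` whose supremum is the Legendre transform at `x` of
`θ ↦ (∑ i, (m i * θ i)⁺) ^ (1 / ν)`. The products `m i * θ i` with the wrong sign are discarded by
the positive part, and the constant `c₀` of the theorem is absorbed into `m`. -/
noncomputable def legendreObjective (ν : ℝ) (m x θ : ι → ℝ) : ℝ :=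
  ∑ i, θ i * x i - (∑ i, (m i * θ i)⁺) ^ (1 / ν)

lemma legendreObjective_single [DecidableEq ι] (i : ι) (t : ℝ) :
    legendreObjective ν m x (Pi.single i t) = t * x i - (m i * t)⁺ ^ (1 / ν) := by
  have hlinear : ∑ j, (Pi.single i t : ι → ℝ) j * x j = t * x i := by
    rw [Fintype.sum_eq_single i fun j hj ↦ by simp [hj], Pi.single_eq_same]
  have hpenalty : ∑ j, (m j * (Pi.single i t : ι → ℝ) j)⁺ = (m i * t)⁺ := by
    rw [Fintype.sum_eq_single i fun j hj ↦ by simp [hj], Pi.single_eq_same]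
  rw [legendreObjective, hlinear, hpenalty]

lemma Vfun_le_iSup_legendreObjective (hν : ν ∈ Ioo 0 1) (i : ι) :
    Vfun ν (m i) (x i) ≤ ⨆ θ, (legendreObjective ν m x θ : EReal) := by
  classical
  refine (Vfun_le_iSup_mul_sub_posPart_rpow hν).trans
    (iSup_le fun t ↦ le_iSup_of_le (Pi.single i t) ?_)
  rw [legendreObjective_single]

lemma exists_legendreObjective_le_rpowConj [Nonempty ι] (hν : ν ∈ Ioo 0 1)
    (hV : ∀ i, Vfun ν (m i) (x i) ≠ ⊤) :
    ∃ k, ∀ θ, legendreObjective ν m x θ ≤ rpowConj ν (x k / m k) := by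
  obtain ⟨k, hk⟩ := Finite.exists_max fun i ↦ x i / m i
  refine ⟨k, fun θ ↦ ?_⟩
  have hpenalty : 0 ≤ ∑ i, (m i * θ i)⁺ := Finset.sum_nonneg fun i _ ↦ posPart_nonneg _
  have hlinear : ∑ i, θ i * x i ≤ (∑ i, (m i * θ i)⁺) * (x k / m k) := by
    rw [Finset.sum_mul]
    exact Finset.sum_le_sum fun i _ ↦ (mul_le_posPart_mul_div (hV i) (θ i)).trans
      (mul_le_mul_of_nonneg_left (hk i) (posPart_nonneg _))
  exact (sub_le_sub_right hlinear _).trans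
    (mul_sub_rpow_le_rpowConj hν hpenalty (div_nonneg_of_Vfun_ne_top (hV k)))

lemma iSup_legendreObjective_eq_iSup_Vfun [Nonempty ι] (hν : ν ∈ Ioo 0 1) :
    ⨆ θ, (legendreObjective ν m x θ : EReal) = ⨆ i, Vfun ν (m i) (x i) := by
  refine le_antisymm ?_ (iSup_le fun i ↦ Vfun_le_iSup_legendreObjective hν i)
  by_cases hV : ∀ i, Vfun ν (m i) (x i) ≠ ⊤
  · obtain ⟨k, hk⟩ := exists_legendreObjective_le_rpowConj hν hV
    refine iSup_le fun θ ↦ le_iSup_of_le k ?_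
    rw [Vfun_eq_rpowConj hν.2 (hV k)]
    exact EReal.coe_le_coe_iff.2 (hk θ)
  · push Not at hV
    obtain ⟨i, hi⟩ := hV
    exact le_iSup_of_le i (hi ▸ le_top)

lemma mul_sum_mul_ite_nonneg_eq_sum_posPart {c : ℝ} (hc : 0 ≤ c) (m θ : ι → ℝ) :
    c * ∑ i, m i * θ i * (if 0 ≤ θ i * m i then 1 else 0) = ∑ i, (c * m i * θ i)⁺ := by
  rw [Finset.mul_sum]
  refine Finset.sum_congr rfl fun i _ ↦ ?_
  rw [mul_comm (θ i), mul_ite, mul_one, mul_zero, mul_assoc c]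
  split_ifs with hsign
  · rw [posPart_of_nonneg (mul_nonneg hc hsign)]
  · rw [posPart_of_nonpos (mul_nonpos_of_nonneg_of_nonpos hc (not_le.1 hsign).le), mul_zero]

end Legendre

/-- Proposition 4.2: explicit moderate-deviation rate function in the case
`ν_0 > max ν_i`, `m ≠ 0`.  With `A = {x : x_i m_i ≥ 0 ∀i, and x_j = 0 whenever m_j = 0}`,
`sup_θ {Σ_i θ_i x_i - (c_0 Σ_i m_i θ_i 1{θ_i m_i ≥ 0})^{1/ν_0}}` equals
`max_i V_{ν_0, c_0 m_i}(x_i)` on `A` and `+∞` off `A`. -/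
theorem stmt_7 (h : ℕ) (hh : 1 ≤ h) (ν0 : ℝ) (hν0 : ν0 ∈ Set.Ioo (0 : ℝ) 1)
    (c0 : ℝ) (hc0 : 0 < c0) (m : Fin h → ℝ) (hm : m ≠ 0) (x : Fin h → ℝ) :
    (((∀ i, 0 ≤ x i * m i) ∧ (∀ j, m j = 0 → x j = 0)) →
      (⨆ θ : Fin h → ℝ,
          (((∑ i, θ i * x i)
            - (c0 * ∑ i, m i * θ i * (if 0 ≤ θ i * m i then 1 else 0)) ^ (1 / ν0) : ℝ) : EReal))
        = ⨆ i, Vfun ν0 (c0 * m i) (x i)) ∧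
    ((¬ ((∀ i, 0 ≤ x i * m i) ∧ (∀ j, m j = 0 → x j = 0))) →
      (⨆ θ : Fin h → ℝ,
          (((∑ i, θ i * x i)
            - (c0 * ∑ i, m i * θ i * (if 0 ≤ θ i * m i then 1 else 0)) ^ (1 / ν0) : ℝ) : EReal))
        = ⊤) := by
  have : Nonempty (Fin h) := ⟨⟨0, hh⟩⟩
  have hsup := iSup_legendreObjective_eq_iSup_Vfun (m := fun i ↦ c0 * m i) (x := x) hν0
  simp only [mul_sum_mul_ite_nonneg_eq_sum_posPart hc0.le]
  refine ⟨fun _ ↦ hsup, fun hA ↦ hsup.trans ?_⟩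
  obtain ⟨i, hi⟩ : ∃ i, Vfun ν0 (c0 * m i) (x i) = ⊤ := by
    by_contra! hV
    have hdom i := (Vfun_const_mul_ne_top_iff hc0).1 (hV i)
    exact hA ⟨fun i ↦ (hdom i).1, fun i ↦ (hdom i).2⟩
  exact top_le_iff.1 (hi ▸ le_iSup (fun i ↦ Vfun ν0 (c0 * m i) (x i)) i)
end

section
/- Let h ≥ 1 be an integer, ν_0, ν_1, …, ν_h ∈ (0,1), c_0, c_1, …, c_h > 0, and let κ_1, …, κ_h : ℝ → (−∞,∞] be convex functions with κ_i(0) = 0 and κ_i finite on a neighborhood of 0 for every i. Define Ψ(θ_1,…,θ_h) := Σ_{i=1}^h (c_i κ_i(θ_i))^{1/ν_i} · 1{κ_i(θ_i) ≥ 0} + (c_0 Σ_{i=1}^h κ_i(θ_i))^{1/ν_0} · 1{Σ_{i=1}^h κ_i(θ_i) ≥ 0} (with value +∞ if some κ_i(θ_i) = +∞), and I_LD(x_1,…,x_h) := sup_{(θ_1,…,θ_h) ∈ ℝ^h} { Σ_{i=1}^h θ_i x_i − Ψ(θ_1,…,θ_h) } ∈ [0,∞]. Then I_LD(x_1,…,x_h)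 = 0 if and only if (x_1,…,x_h) = (0,…,0). -/
open Set Filter
open scoped ENNReal

/-- Map an extended real number to `[0,∞]` (negative values go to `0`). -/
noncomputable def erealToENNReal (x : EReal) : ℝ≥0∞ :=
  if x = ⊤ then ⊤ else ENNReal.ofReal x.toReal

/-- The Legendre-Fenchel transform `x ↦ sup_θ {⟨θ, x⟩ - Ψ(θ)}`, as a `[0,∞]`-valued function. -/
noncomputable def legendreENN {h : ℕ} (Ψ : (Fin h → ℝ) → ℝ≥0∞) (x : Fin h → ℝ) : ℝ≥0∞ :=
  erealToENNReal (⨆ θ : Fin h → ℝ, (((∑ i, θ i * x i : ℝ) : EReal) - (Ψ θ : EReal)))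

open Classical in
/-- The function `Ψ` of Proposition 3.1:
`Ψ(θ) = Σ_i (c_i κ_i(θ_i))^{1/ν_i} 1{κ_i(θ_i) ≥ 0} + (c_0 Σ_i κ_i(θ_i))^{1/ν_0} 1{Σ_i κ_i(θ_i) ≥ 0}`,
with `Ψ(θ) = ∞` if some `κ_i(θ_i) = ∞`. -/
noncomputable def PsiStar {h : ℕ} (ν0 : ℝ) (ν : Fin h → ℝ) (c0 : ℝ) (c : Fin h → ℝ)
    (κE : Fin h → ℝ → EReal) (θ : Fin h → ℝ) : ℝ≥0∞ :=
  if ∀ i, κE i (θ i) ≠ ⊤ then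
    ENNReal.ofReal
      ((∑ i, if 0 ≤ (κE i (θ i)).toReal then (c i * (κE i (θ i)).toReal) ^ (1 / ν i) else 0) +
        (if 0 ≤ ∑ i, (κE i (θ i)).toReal
          then (c0 * ∑ i, (κE i (θ i)).toReal) ^ (1 / ν0) else 0))
  else ⊤

/-!
Since `Ψ ≥ 0`, the supremum defining `I_LD 0` is at most `0`. Conversely, a convex function is
Lipschitz near an interior point of its domain, so `κ_i θ = O(θ)` at `0`, and the exponents
`1 / ν_i > 1` turn this into `Ψ θ = o(θ)`. If `I_LD x = 0`, then `⟨θ, x⟩ ≤ Ψ θ` for all `θ`; along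
the ray `θ = t x`, `t ↓ 0`, this reads `t |x|² ≤ o(t)`, which forces `x = 0`.
-/

open Asymptotics Topology

lemma erealToENNReal_eq_toENNReal (x : EReal) : erealToENNReal x = x.toENNReal := rfl

lemma legendreENN_eq_zero_iff {h : ℕ} {Ψ : (Fin h → ℝ) → ℝ≥0∞} {x : Fin h → ℝ} :
    legendreENN Ψ x = 0 ↔ ∀ θ : Fin h → ℝ, ((θ ⬝ᵥ x : ℝ) : EReal) ≤ Ψ θ := by
  simp only [legendreENN, erealToENNReal_eq_toENNReal, EReal.toENNReal_eq_zero_iff, iSup_le_iff,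
    EReal.sub_nonpos, dotProduct]

lemma legendreENN_zero {h : ℕ} (Ψ : (Fin h → ℝ) → ℝ≥0∞) : legendreENN Ψ 0 = 0 := by
  simp only [legendreENN_eq_zero_iff, dotProduct_zero, EReal.coe_zero, EReal.coe_ennreal_nonneg,
    implies_true]

lemma eq_zero_of_legendreENN_eq_zero {h : ℕ} {Ψ : (Fin h → ℝ) → ℝ≥0∞} {x : Fin h → ℝ}
    (hΨ_ne_top : ∀ᶠ θ in 𝓝 0, Ψ θ ≠ ⊤) (hΨ : (fun θ ↦ (Ψ θ).toReal) =o[𝓝 0] fun θ ↦ θ)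
    (hx : legendreENN Ψ x = 0) : x = 0 := by
  have dotProduct_le {θ : Fin h → ℝ} (hθ : Ψ θ ≠ ⊤) : θ ⬝ᵥ x ≤ (Ψ θ).toReal := by
    have h_le := legendreENN_eq_zero_iff.1 hx θ
    rwa [← EReal.coe_ennreal_toReal hθ, EReal.coe_le_coe_iff] at h_le
  have tendsto_ray : Tendsto (fun t : ℝ ↦ t • x) (𝓝[>] 0) (𝓝 0) := by
    have h_cont : Continuous fun t : ℝ ↦ t • x := by fun_prop
    simpa only [zero_smul] using (h_cont.tendsto 0).mono_left nhdsWithin_le_nhds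
  have dotProduct_isBigO :
      (fun t : ℝ ↦ (x ⬝ᵥ x) * t) =O[𝓝[>] 0] fun t ↦ (Ψ (t • x)).toReal := by
    refine .of_norm_eventuallyLE ?_
    filter_upwards [tendsto_ray.eventually hΨ_ne_top, self_mem_nhdsWithin] with t ht ht_pos
    have h_nonneg : 0 ≤ (x ⬝ᵥ x) * t :=
      mul_nonneg (Fintype.sum_nonneg fun i ↦ mul_self_nonneg (x i)) (le_of_lt ht_pos)
    simpa only [Real.norm_of_nonneg h_nonneg, smul_dotProduct, smul_eq_mul, mul_comm t]
      using dotProduct_le ht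
  have ray_isBigO : (fun t : ℝ ↦ t • x) =O[𝓝[>] 0] fun t ↦ t :=
    .of_bound ‖x‖ (.of_forall fun t ↦ (norm_smul t x).trans (mul_comm _ _) |>.le)
  have dotProduct_isLittleO : (fun t : ℝ ↦ (x ⬝ᵥ x) * t) =o[𝓝[>] 0] fun t ↦ t :=
    (dotProduct_isBigO.trans_isLittleO (hΨ.comp_tendsto tendsto_ray)).trans_isBigO ray_isBigO
  by_contra hx_ne
  have frequently_ne_zero : ∃ᶠ t : ℝ in 𝓝[>] 0, t ≠ 0 :=
    Eventually.frequently <| eventually_mem_nhdsWithin.mono fun _ ht ↦ (mem_Ioi.1 ht).ne'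
  exact isLittleO_irrefl frequently_ne_zero <|
    (isLittleO_const_mul_left_iff (dotProduct_self_eq_zero.not.2 hx_ne)).1 dotProduct_isLittleO

lemma convexOn_toReal_of_ereal_convex {E : Type*} [AddCommMonoid E] [Module ℝ E] {κ : E → EReal}
    (hκ_ne_bot : ∀ θ, κ θ ≠ ⊥)
    (hκ_convex : ∀ (a b : ℝ) (θ₁ θ₂ : E), 0 ≤ a → 0 ≤ b → a + b = 1 →
      κ (a • θ₁ + b • θ₂) ≤ (a : EReal) * κ θ₁ + (b : EReal) * κ θ₂) :
    ConvexOn ℝ {θ | κ θ ≠ ⊤} fun θ ↦ (κ θ).toReal := by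
  have le_coe {θ₁ θ₂ : E} (h₁ : κ θ₁ ≠ ⊤) (h₂ : κ θ₂ ≠ ⊤) {a b : ℝ} (ha : 0 ≤ a) (hb : 0 ≤ b)
      (hab : a + b = 1) :
      κ (a • θ₁ + b • θ₂) ≤ ((a * (κ θ₁).toReal + b * (κ θ₂).toReal : ℝ) : EReal) := by
    rw [EReal.coe_add, EReal.coe_mul, EReal.coe_mul, EReal.coe_toReal h₁ (hκ_ne_bot _),
      EReal.coe_toReal h₂ (hκ_ne_bot _)]
    exact hκ_convex a b θ₁ θ₂ ha hb hab
  refine ⟨fun θ₁ h₁ θ₂ h₂ a b ha hb hab ↦ ?_, fun θ₁ h₁ θ₂ h₂ a b ha hb hab ↦ ?_⟩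
  · exact ((le_coe h₁ h₂ ha hb hab).trans_lt (EReal.coe_lt_top _)).ne
  · exact EReal.toReal_le_toReal (le_coe h₁ h₂ ha hb hab) (hκ_ne_bot _) (EReal.coe_ne_top _)

lemma isBigO_sub_of_convexOn {E : Type*} [NormedAddCommGroup E] [NormedSpace ℝ E]
    [FiniteDimensional ℝ E] {s : Set E} {f : E → ℝ} {x : E} (hf : ConvexOn ℝ s f) (hs : s ∈ 𝓝 x) :
    (fun y ↦ f y - f x) =O[𝓝 x] fun y ↦ y - x := by
  obtain ⟨K, t, ht, hK⟩ := hf.locallyLipschitzOn_interior (mem_interior_iff_mem_nhds.2 hs)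
  rw [nhdsWithin_eq_nhds.2 (interior_mem_nhds.2 hs)] at ht
  refine .of_bound K ?_
  filter_upwards [ht] with y hy
  exact hK.norm_sub_le hy (mem_of_mem_nhds ht)

lemma isLittleO_norm_rpow_id {E : Type*} [SeminormedAddCommGroup E] {p : ℝ} (hp : 1 < p) :
    (fun v : E ↦ ‖v‖ ^ p) =o[𝓝 0] fun v ↦ v := by
  have tendsto_norm_rpow : Tendsto (fun v : E ↦ ‖v‖ ^ (p - 1)) (𝓝 0) (𝓝 0) := by
    have h_cont : Continuous fun v : E ↦ ‖v‖ ^ (p - 1) :=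
      continuous_norm.rpow_const fun _ ↦ .inr (by linarith)
    exact h_cont.tendsto' 0 0 (by rw [norm_zero, Real.zero_rpow (by linarith)])
  have h_mul := ((isLittleO_one_iff ℝ).2 tendsto_norm_rpow).mul_isBigO
    (isBigO_refl (fun v : E ↦ ‖v‖) (𝓝 0))
  refine (h_mul.congr (fun v ↦ ?_) fun v ↦ one_mul ‖v‖).of_norm_right
  rw [← Real.rpow_add_one' (norm_nonneg v) (by linarith), sub_add_cancel]

lemma isLittleO_ite_rpow {α E : Type*} [SeminormedAddCommGroup E] {l : Filter α} {k : α → ℝ}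
    {g : α → E} (hk : k =O[l] g) (hg : Tendsto g l (𝓝 0)) (c : ℝ) {p : ℝ} (hp : 1 < p) :
    (fun a ↦ if 0 ≤ k a then (c * k a) ^ p else 0) =o[l] g := by
  have ite_isBigO_rpow : (fun a ↦ if 0 ≤ k a then (c * k a) ^ p else 0) =O[l]
      fun a ↦ (c * k a) ^ p :=
    isBigO_of_le l fun a ↦ by split_ifs <;> simp
  have rpow_isBigO : (fun a ↦ (c * k a) ^ p) =O[l] fun a ↦ ‖g a‖ ^ p :=
    (hk.norm_right.const_mul_left c).rpow (by positivity) (.of_forall fun a ↦ norm_nonneg (g a))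
  exact (ite_isBigO_rpow.trans rpow_isBigO).trans_isLittleO
    ((isLittleO_norm_rpow_id hp).comp_tendsto hg)

section PsiStar

variable {h : ℕ} {ν0 : ℝ} {ν : Fin h → ℝ} {c0 : ℝ} {c : Fin h → ℝ} {κE : Fin h → ℝ → EReal}

lemma eventually_psiStar_ne_top (hκ : ∀ i, ∀ᶠ t in 𝓝 0, κE i t ≠ ⊤) :
    ∀ᶠ θ in 𝓝 0, PsiStar ν0 ν c0 c κE θ ≠ ⊤ := by
  have eventually_all_ne_top : ∀ᶠ θ : Fin h → ℝ in 𝓝 0, ∀ i, κE i (θ i) ≠ ⊤ :=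
    eventually_all.2 fun i ↦
      have tendsto_coord : Tendsto (fun θ : Fin h → ℝ ↦ θ i) (𝓝 0) (𝓝 0) :=
        (continuous_apply i).tendsto' 0 0 rfl
      tendsto_coord.eventually (hκ i)
  filter_upwards [eventually_all_ne_top] with θ hθ
  rw [PsiStar, if_pos hθ]
  exact ENNReal.ofReal_ne_top

lemma psiStar_toReal_isLittleO (hν0 : ν0 ∈ Ioo 0 1) (hν : ∀ i, ν i ∈ Ioo 0 1)
    (hκ : ∀ i, (fun t ↦ (κE i t).toReal) =O[𝓝 0] fun t ↦ t) :
    (fun θ ↦ (PsiStar ν0 ν c0 c κE θ).toReal) =o[𝓝 0] fun θ ↦ θ := by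
  have coord_isBigO (i : Fin h) : (fun θ : Fin h → ℝ ↦ (κE i (θ i)).toReal) =O[𝓝 0] fun θ ↦ θ :=
    ((hκ i).comp_tendsto ((continuous_apply i).tendsto' 0 0 rfl)).trans
      (isBigO_of_le _ fun θ ↦ norm_le_pi_norm θ i)
  have coord_terms_isLittleO :
      (fun θ : Fin h → ℝ ↦ ∑ i, if 0 ≤ (κE i (θ i)).toReal
        then (c i * (κE i (θ i)).toReal) ^ (1 / ν i) else 0) =o[𝓝 0] fun θ ↦ θ :=
    .fun_sum fun i _ ↦
      isLittleO_ite_rpow (coord_isBigO i) tendsto_id (c i) (one_lt_one_div (hν i).1 (hν i).2)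
  have total_term_isLittleO :
      (fun θ : Fin h → ℝ ↦ if 0 ≤ ∑ i, (κE i (θ i)).toReal
        then (c0 * ∑ i, (κE i (θ i)).toReal) ^ (1 / ν0) else 0) =o[𝓝 0] fun θ ↦ θ :=
    isLittleO_ite_rpow (.fun_sum fun i _ ↦ coord_isBigO i) tendsto_id c0
      (one_lt_one_div hν0.1 hν0.2)
  refine IsBigO.trans_isLittleO (isBigO_of_le _ fun θ ↦ ?_)
    (coord_terms_isLittleO.add total_term_isLittleO)
  by_cases hθ : ∀ i, κE i (θ i) ≠ ⊤
  · rw [PsiStar, if_pos hθ, ENNReal.toReal_ofReal', Real.norm_of_nonneg (le_max_right _ _)]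
    exact max_le (le_abs_self _) (abs_nonneg _)
  · rw [PsiStar, if_neg hθ, ENNReal.toReal_top, norm_zero]
    exact norm_nonneg _

end PsiStar

/-- The reference rate function `I_LD`, the Legendre-Fenchel transform of `Ψ`, vanishes
uniquely at the origin: here the `κ_i : ℝ → (-∞,∞]` are convex, vanish at `0` and are finite
in a neighborhood of `0`. -/
theorem stmt_16 (h : ℕ) (hh : 1 ≤ h)
    (ν0 : ℝ) (ν : Fin h → ℝ) (hν0 : ν0 ∈ Set.Ioo (0 : ℝ) 1) (hν : ∀ i, ν i ∈ Set.Ioo (0 : ℝ) 1)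
    (c0 : ℝ) (c : Fin h → ℝ) (hc0 : 0 < c0) (hc : ∀ i, 0 < c i)
    (κE : Fin h → ℝ → EReal)
    (hκbot : ∀ i θ, κE i θ ≠ ⊥)
    (hκ0 : ∀ i, κE i 0 = 0)
    (hκconv : ∀ i (a b θ₁ θ₂ : ℝ), 0 ≤ a → 0 ≤ b → a + b = 1 →
      κE i (a * θ₁ + b * θ₂) ≤ (a : EReal) * κE i θ₁ + (b : EReal) * κE i θ₂)
    (hκfin : ∀ i, ∃ ε > (0 : ℝ), ∀ θ : ℝ, |θ| < ε → κE i θ ≠ ⊤)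
    (x : Fin h → ℝ) :
    legendreENN (PsiStar ν0 ν c0 c κE) x = 0 ↔ x = 0 := by
  have hκ_ne_top (i : Fin h) : ∀ᶠ t in 𝓝 0, κE i t ≠ ⊤ := by
    obtain ⟨ε, hε, h_fin⟩ := hκfin i
    filter_upwards [Metric.ball_mem_nhds 0 hε] with t ht
    exact h_fin t (mem_ball_zero_iff.1 ht)
  refine ⟨eq_zero_of_legendreENN_eq_zero ?_ ?_, fun hx ↦ hx ▸ legendreENN_zero _⟩
  · exact eventually_psiStar_ne_top hκ_ne_top
  · refine psiStar_toReal_isLittleO hν0 hν fun i ↦ ?_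
    have toReal_convexOn := convexOn_toReal_of_ereal_convex (hκbot i) (hκconv i)
    simpa only [hκ0, EReal.toReal_zero, sub_zero] using
      isBigO_sub_of_convexOn toReal_convexOn (hκ_ne_top i)
end

section
/- Let ν ∈ (0,1) and a ≤ 0, and let E_ν denote the Mittag-Leffler function. Then lim_{t→∞} (1/t) log E_ν(a t^ν) = 0. -/
open Filter

/-- The Mittag-Leffler function `E_α(x) = Σ_k x^k / Γ(α k + 1)`. -/
noncomputable def mittagLeffler (α x : ℝ) : ℝ := ∑' k : ℕ, x ^ k / Real.Gamma (α * k + 1)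

/-!
The function `f t = E_ν(a t ^ ν)` solves the fractional relaxation equation `D^ν f = a f`,
`f 0 = 1`. In Marchaud's form of the fractional derivative the equation reads
`(1 - a Γ(1 - ν) t ^ ν) f t + ν ∫₀¹ (f t - f (t s)) (1 - s) ^ (-ν - 1) ds = 1`. At a maximum of `f`
over `[0, T]` the integral is nonnegative and at a minimum it is nonpositive. For `a ≤ 0` this gives
`1 / (1 - a Γ(1 - ν) t ^ ν) ≤ f t ≤ 1`, so `log f t = O(t ^ ν) = o(t)`.
-/

open MeasureTheory Set Topology ProbabilityTheory

section Gamma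

lemma Gamma_add_one_sub_le_rpow_neg_mul {x β : ℝ} (hx : 0 < x) (hβ₀ : 0 < β) (hβ₁ : β < 1) :
    Real.Gamma (x + 1 - β) ≤ x ^ (-β) * Real.Gamma (x + 1) := by
  have hΓ := Real.Gamma_pos_of_pos hx
  calc Real.Gamma (x + 1 - β) = Real.Gamma (β * x + (1 - β) * (x + 1)) := by ring_nf
    _ ≤ Real.Gamma x ^ β * Real.Gamma (x + 1) ^ (1 - β) :=
      Real.Gamma_mul_add_mul_le_rpow_Gamma_mul_rpow_Gamma hx (by positivity) hβ₀
        (sub_pos.2 hβ₁) (by ring)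
    _ = x ^ (1 - β) * (Real.Gamma x ^ β * Real.Gamma x ^ (1 - β)) := by
      rw [Real.Gamma_add_one hx.ne', Real.mul_rpow hx.le hΓ.le]
      ring
    _ = x ^ (-β) * Real.Gamma (x + 1) := by
      rw [← Real.rpow_add hΓ, add_sub_cancel, Real.rpow_one, Real.Gamma_add_one hx.ne',
        sub_eq_neg_add, Real.rpow_add_one hx.ne', mul_assoc]

lemma tendsto_Gamma_div_Gamma_add_atTop {α : ℝ} (hα : 0 < α) :
    Tendsto (fun x : ℝ ↦ Real.Gamma x / Real.Gamma (x + α)) atTop (𝓝 0) := by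
  obtain ⟨β, hβ₀, hβ⟩ : ∃ β, 0 < β ∧ β < min α 1 := exists_between (lt_min hα one_pos)
  obtain ⟨hβα, hβ₁⟩ := lt_min_iff.1 hβ
  have hlim : Tendsto (fun x : ℝ ↦ (x + (β - 1)) ^ (-β)) atTop (𝓝 0) :=
    (tendsto_rpow_neg_atTop hβ₀).comp (tendsto_atTop_add_const_right _ _ tendsto_id)
  refine squeeze_zero' ?_ ?_ hlim
  · filter_upwards [eventually_gt_atTop 0] with x hx
    exact div_nonneg (Real.Gamma_pos_of_pos hx).le (Real.Gamma_pos_of_pos (by positivity)).le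
  · filter_upwards [eventually_ge_atTop 2] with x hx
    have hmono : Real.Gamma (x + β) ≤ Real.Gamma (x + α) :=
      Real.Gamma_strictMonoOn_Ici.monotoneOn (mem_Ici.2 (by linarith)) (mem_Ici.2 (by linarith))
        (by linarith)
    have hy : 0 < x + (β - 1) := by linarith
    rw [div_le_iff₀ (Real.Gamma_pos_of_pos (by linarith))]
    calc Real.Gamma x = Real.Gamma (x + (β - 1) + 1 - β) := by ring_nf
      _ ≤ (x + (β - 1)) ^ (-β) * Real.Gamma (x + (β - 1) + 1) :=
        Gamma_add_one_sub_le_rpow_neg_mul hy hβ₀ hβ₁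
      _ = (x + (β - 1)) ^ (-β) * Real.Gamma (x + β) := by ring_nf
      _ ≤ (x + (β - 1)) ^ (-β) * Real.Gamma (x + α) := by gcongr

end Gamma

section MittagLeffler

variable {α : ℝ}

lemma Gamma_mul_natCast_add_one_pos (hα : 0 ≤ α) (k : ℕ) : 0 < Real.Gamma (α * k + 1) :=
  Real.Gamma_pos_of_pos (by positivity)

lemma hasSum_mittagLeffler (hα : 0 < α) (x : ℝ) :
    HasSum (fun k : ℕ ↦ x ^ k / Real.Gamma (α * k + 1)) (mittagLeffler α x) := by
  refine Summable.hasSum ?_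
  rcases eq_or_ne x 0 with rfl | hx
  · exact summable_of_ne_finset_zero (s := {0}) fun k hk ↦ by
      simp [Finset.notMem_singleton.1 hk]
  have hΓ := Gamma_mul_natCast_add_one_pos hα.le
  refine summable_of_ratio_test_tendsto_lt_one one_pos
    (.of_forall fun k ↦ div_ne_zero (pow_ne_zero k hx) (hΓ k).ne') ?_
  have harg : Tendsto (fun k : ℕ ↦ α * (k : ℝ) + 1) atTop atTop :=
    tendsto_atTop_add_const_right _ _ (tendsto_natCast_atTop_atTop.const_mul_atTop hα)
  have hratio := ((tendsto_Gamma_div_Gamma_add_atTop hα).comp harg).const_mul |x|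
  rw [mul_zero] at hratio
  refine hratio.congr fun k ↦ ?_
  have hsucc : α * (k : ℝ) + 1 + α = α * (k + 1 : ℕ) + 1 := by push_cast; ring
  have hk := hΓ k
  have hk' := hΓ (k + 1)
  rw [Function.comp_apply, hsucc, norm_div, norm_div, norm_pow, norm_pow, Real.norm_eq_abs,
    Real.norm_of_nonneg hk.le, Real.norm_of_nonneg hk'.le]
  field_simp
  ring

lemma continuous_mittagLeffler (hα : 0 < α) : Continuous (mittagLeffler α) := by
  refine continuous_iff_continuousAt.2 fun x ↦ ?_
  suffices ContinuousOn (mittagLeffler α) (Metric.closedBall 0 (‖x‖ + 1)) from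
    this.continuousAt (Metric.closedBall_mem_nhds_of_mem (by simp))
  refine continuousOn_tsum (fun k ↦ by fun_prop)
    (hasSum_mittagLeffler hα (‖x‖ + 1)).summable fun k y hy ↦ ?_
  have hΓ := Gamma_mul_natCast_add_one_pos hα.le k
  rw [norm_div, norm_pow, Real.norm_of_nonneg hΓ.le]
  gcongr
  exact mem_closedBall_zero_iff.1 hy

lemma hasSum_pow_div_Gamma_sub (hα : 0 < α) (x : ℝ) :
    HasSum (fun k : ℕ ↦ x ^ k / Real.Gamma (α * k + 1 - α))
      (1 / Real.Gamma (1 - α) + x * mittagLeffler α x) := by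
  rw [← hasSum_nat_add_iff' 1]
  simp only [Finset.sum_range_one, pow_zero, Nat.cast_zero, mul_zero, zero_add,
    add_sub_cancel_left]
  refine ((hasSum_mittagLeffler hα x).mul_left x).congr_fun fun k ↦ ?_
  rw [show α * ((k + 1 : ℕ) : ℝ) + 1 - α = α * k + 1 by push_cast; ring, pow_succ']
  ring

end MittagLeffler

section Beta

variable {p q : ℝ}

lemma ofReal_rpow_mul_one_sub_rpow {s : ℝ} (hs : s ∈ Icc (0 : ℝ) 1) :
    ((s ^ p * (1 - s) ^ q : ℝ) : ℂ) = (s : ℂ) ^ (p : ℂ) * (1 - (s : ℂ)) ^ (q : ℂ) := by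
  rw [Complex.ofReal_mul, Complex.ofReal_cpow hs.1, Complex.ofReal_cpow (sub_nonneg.2 hs.2),
    Complex.ofReal_sub, Complex.ofReal_one]

lemma intervalIntegrable_rpow_mul_one_sub_rpow (hp : 0 < p) (hq : 0 < q) :
    IntervalIntegrable (fun s : ℝ ↦ s ^ (p - 1) * (1 - s) ^ (q - 1)) volume 0 1 := by
  have h := Complex.betaIntegral_convergent (u := p) (v := q) (by simpa) (by simpa)
  rw [intervalIntegrable_iff] at h ⊢
  refine h.re.congr ?_
  filter_upwards [ae_restrict_mem measurableSet_uIoc] with s hs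
  rw [uIoc_of_le zero_le_one] at hs
  rw [← Complex.ofReal_one, ← Complex.ofReal_sub p, ← Complex.ofReal_sub q, Complex.ofReal_one,
    ← ofReal_rpow_mul_one_sub_rpow (Ioc_subset_Icc_self hs)]
  exact Complex.ofReal_re _

lemma integral_rpow_mul_one_sub_rpow (hp : 0 < p) (hq : 0 < q) :
    ∫ s in (0 : ℝ)..1, s ^ (p - 1) * (1 - s) ^ (q - 1) = beta p q := by
  have h : ∫ s in (0 : ℝ)..1, ((s ^ (p - 1) * (1 - s) ^ (q - 1) : ℝ) : ℂ) =
      Complex.betaIntegral p q := by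
    refine intervalIntegral.integral_congr fun s hs ↦ ?_
    rw [uIcc_of_le zero_le_one] at hs
    simpa using ofReal_rpow_mul_one_sub_rpow (p := p - 1) (q := q - 1) hs
  rw [beta_eq_betaIntegralReal p q hp hq, ← h, intervalIntegral.integral_ofReal, Complex.ofReal_re]

end Beta

section MarchaudIntegral

/-- The integral in Marchaud's form of the fractional derivative of order `ν` on `[0, t]`, rescaled
to `[0, 1]`: for `ν ∈ (0, 1)` the Caputo derivative of `f` at `t > 0` is
`(f t - f 0 + ν * marchaudIntegral ν f t) / (Γ(1 - ν) t ^ ν)`. Unlike Caputo's integral of `f'`, it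
has an evident sign where `f` is extremal. -/
noncomputable def marchaudIntegral (ν : ℝ) (f : ℝ → ℝ) (t : ℝ) : ℝ :=
  ∫ s in (0 : ℝ)..1, (f t - f (t * s)) * (1 - s) ^ (-ν - 1)

variable {ν p t : ℝ}

lemma one_sub_rpow_nonneg {s : ℝ} (hp : 0 ≤ p) (hs : s ∈ Icc (0 : ℝ) 1) : 0 ≤ 1 - s ^ p :=
  sub_nonneg.2 (Real.rpow_le_one hs.1 hs.2 hp)

lemma one_sub_rpow_le {s : ℝ} (hp : 0 ≤ p) (hs : s ∈ Icc (0 : ℝ) 1) :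
    1 - s ^ p ≤ max 1 p * (1 - s) := by
  rcases le_total 1 p with h | h
  · have bernoulli := one_add_mul_self_le_rpow_one_add (s := s - 1) (by linarith [hs.1]) h
    rw [add_sub_cancel] at bernoulli
    rw [max_eq_right h]
    linarith
  · have := Real.rpow_le_rpow_of_exponent_ge' hs.1 hs.2 hp h
    rw [Real.rpow_one] at this
    rw [max_eq_left h]
    linarith

lemma one_sub_rpow_mul_one_sub_rpow_le (r : ℝ) {s : ℝ} (hp : 0 ≤ p) (hs : s ∈ Ico (0 : ℝ) 1) :
    (1 - s ^ p) * (1 - s) ^ r ≤ max 1 p * (1 - s) ^ (r + 1) := by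
  have hs' : 0 < 1 - s := sub_pos.2 hs.2
  rw [Real.rpow_add_one hs'.ne', mul_comm (_ ^ r), ← mul_assoc]
  gcongr
  exact one_sub_rpow_le hp (Ico_subset_Icc_self hs)

lemma intervalIntegrable_one_sub_rpow_mul (hν : ν < 1) (hp : 0 ≤ p) :
    IntervalIntegrable (fun s : ℝ ↦ (1 - s ^ p) * (1 - s) ^ (-ν - 1)) volume 0 1 := by
  have hdom := (intervalIntegrable_rpow_mul_one_sub_rpow one_pos (sub_pos.2 hν)).const_mul (max 1 p)
  refine hdom.mono_fun (Measurable.aestronglyMeasurable (by fun_prop)) ?_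
  filter_upwards [ae_restrict_mem measurableSet_uIoc] with s hs
  rw [uIoc_of_le zero_le_one] at hs
  rcases hs.2.eq_or_lt with rfl | hs₁
  · rw [Real.one_rpow, sub_self, zero_mul, norm_zero]
    exact norm_nonneg _
  have hrpow (r : ℝ) : 0 ≤ (1 - s) ^ r := Real.rpow_nonneg (sub_nonneg.2 hs.2) r
  have hnonneg := one_sub_rpow_nonneg hp (Ioc_subset_Icc_self hs)
  have hle := one_sub_rpow_mul_one_sub_rpow_le (-ν - 1) hp ⟨hs.1.le, hs₁⟩
  rw [sub_self, Real.rpow_zero, one_mul, Real.norm_of_nonneg (mul_nonneg hnonneg (hrpow _)),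
    Real.norm_of_nonneg (mul_nonneg (by positivity) (hrpow _))]
  convert hle using 3
  ring

lemma tendsto_one_sub_rpow_mul_nhdsLT_one (hν : ν < 1) (hp : 0 ≤ p) :
    Tendsto (fun s : ℝ ↦ (1 - s ^ p) * (1 - s) ^ (-ν)) (𝓝[<] 1) (𝓝 0) := by
  have hν' : 0 < -ν + 1 := by linarith
  have hbound : Tendsto (fun s : ℝ ↦ max 1 p * (1 - s) ^ (-ν + 1)) (𝓝[<] 1) (𝓝 0) := by
    have : Continuous fun s : ℝ ↦ max 1 p * (1 - s) ^ (-ν + 1) :=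
      continuous_const.mul ((continuous_sub_left 1).rpow_const fun _ ↦ Or.inr hν'.le)
    simpa [Real.zero_rpow hν'.ne'] using (this.tendsto 1).mono_left nhdsWithin_le_nhds
  refine squeeze_zero' ?_ ?_ hbound <;>
    filter_upwards [Ioo_mem_nhdsLT (zero_lt_one' ℝ)] with s hs
  · exact mul_nonneg (one_sub_rpow_nonneg hp (Ioo_subset_Icc_self hs))
      (Real.rpow_nonneg (sub_nonneg.2 hs.2.le) _)
  · exact one_sub_rpow_mul_one_sub_rpow_le _ hp (Ioo_subset_Ico_self hs)

lemma mul_integral_one_sub_rpow_mul (hν : ν < 1) (hp : 0 < p) :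
    ν * ∫ s in (0 : ℝ)..1, (1 - s ^ p) * (1 - s) ^ (-ν - 1) = p * beta p (1 - ν) - 1 := by
  have hint := (intervalIntegrable_one_sub_rpow_mul hν hp.le).const_mul ν
  have hbeta := (intervalIntegrable_rpow_mul_one_sub_rpow hp (sub_pos.2 hν)).const_mul p
  have hderiv : ∀ s ∈ Ioo (0 : ℝ) 1, HasDerivAt (fun s : ℝ ↦ (1 - s ^ p) * (1 - s) ^ (-ν))
      (ν * ((1 - s ^ p) * (1 - s) ^ (-ν - 1)) - p * (s ^ (p - 1) * (1 - s) ^ (1 - ν - 1))) s := by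
    intro s hs
    have hleft := (Real.hasDerivAt_rpow_const (p := p) (Or.inl hs.1.ne')).const_sub 1
    have hright := ((hasDerivAt_id' s).const_sub 1).rpow_const (p := -ν)
      (Or.inl (sub_pos.2 hs.2).ne')
    refine (hleft.mul hright).congr_deriv ?_
    rw [show 1 - ν - 1 = -ν by ring]
    ring
  have hzero : Tendsto (fun s : ℝ ↦ (1 - s ^ p) * (1 - s) ^ (-ν)) (𝓝[>] 0) (𝓝 1) := by
    have : ContinuousAt (fun s : ℝ ↦ (1 - s ^ p) * (1 - s) ^ (-ν)) 0 :=
      (continuousAt_const.sub (Real.continuousAt_rpow_const _ _ (Or.inr hp.le))).mul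
        ((continuous_sub_left 1).continuousAt.rpow_const (Or.inl (by simp)))
    simpa [Real.zero_rpow hp.ne'] using this.tendsto.mono_left nhdsWithin_le_nhds
  have hFTC := intervalIntegral.integral_eq_sub_of_hasDerivAt_of_tendsto one_pos hderiv
    (hint.sub hbeta) hzero (tendsto_one_sub_rpow_mul_nhdsLT_one hν hp.le)
  rw [intervalIntegral.integral_sub hint hbeta, intervalIntegral.integral_const_mul,
    intervalIntegral.integral_const_mul, integral_rpow_mul_one_sub_rpow hp (sub_pos.2 hν)] at hFTC
  linarith

lemma rpow_sub_mul_rpow {s : ℝ} (ht : 0 ≤ t) (hs : 0 ≤ s) :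
    t ^ p - (t * s) ^ p = t ^ p * (1 - s ^ p) := by
  rw [Real.mul_rpow ht hs, mul_one_sub]

lemma integrableOn_marchaudIntegral_rpow (hν : ν < 1) (hp : 0 ≤ p) (ht : 0 ≤ t) :
    IntegrableOn (fun s ↦ (t ^ p - (t * s) ^ p) * (1 - s) ^ (-ν - 1)) (Ioc 0 1) := by
  have h := (intervalIntegrable_one_sub_rpow_mul hν hp).const_mul (t ^ p)
  rw [intervalIntegrable_iff_integrableOn_Ioc_of_le zero_le_one] at h
  refine h.congr_fun (fun s hs ↦ ?_) measurableSet_Ioc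
  rw [rpow_sub_mul_rpow ht hs.1.le, mul_assoc]

lemma mul_marchaudIntegral_rpow (hν : ν < 1) (hp : 0 ≤ p) (ht : 0 ≤ t) :
    ν * marchaudIntegral ν (· ^ p) t =
      t ^ p * (Real.Gamma (p + 1) * Real.Gamma (1 - ν) / Real.Gamma (p + 1 - ν) - 1) := by
  have hscale : marchaudIntegral ν (· ^ p) t =
      t ^ p * ∫ s in (0 : ℝ)..1, (1 - s ^ p) * (1 - s) ^ (-ν - 1) := by
    rw [← intervalIntegral.integral_const_mul]
    refine intervalIntegral.integral_congr fun s hs ↦ ?_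
    rw [uIcc_of_le zero_le_one] at hs
    simp only [rpow_sub_mul_rpow ht hs.1, mul_assoc]
  rw [hscale, mul_left_comm]
  rcases hp.eq_or_lt with rfl | hp
  · have : Real.Gamma (1 - ν) ≠ 0 := (Real.Gamma_pos_of_pos (sub_pos.2 hν)).ne'
    simp [this]
  · rw [mul_integral_one_sub_rpow_mul hν hp, beta, Real.Gamma_add_one hp.ne', add_sub_assoc]
    ring

lemma hasSum_marchaudIntegral {ι : Type*} [Countable ι] {c e : ι → ℝ} {f : ℝ → ℝ} (hν : ν < 1)
    (ht : 0 ≤ t) (he : ∀ i, 0 ≤ e i)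
    (hf : ∀ s ∈ Icc 0 t, HasSum (fun i ↦ c i * s ^ e i) (f s))
    (hsum : Summable fun i ↦ |c i| * marchaudIntegral ν (· ^ e i) t) :
    HasSum (fun i ↦ c i * marchaudIntegral ν (· ^ e i) t) (marchaudIntegral ν f t) := by
  simp only [marchaudIntegral, intervalIntegral.integral_of_le zero_le_one,
    ← integral_const_mul] at hsum ⊢
  have hint i := (integrableOn_marchaudIntegral_rpow hν (he i) ht).const_mul (c i)
  have hnorm : ∀ i, ∀ s ∈ Ioc (0 : ℝ) 1,
      |c i| * ((t ^ e i - (t * s) ^ e i) * (1 - s) ^ (-ν - 1)) =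
        ‖c i * ((t ^ e i - (t * s) ^ e i) * (1 - s) ^ (-ν - 1))‖ := by
    intro i s hs
    have h₁ := one_sub_rpow_nonneg (he i) (Ioc_subset_Icc_self hs)
    have h₂ : 0 ≤ 1 - s := sub_nonneg.2 hs.2
    rw [norm_mul, Real.norm_eq_abs, rpow_sub_mul_rpow ht hs.1.le,
      Real.norm_of_nonneg (by positivity)]
  have htsum : ∀ s ∈ Ioc (0 : ℝ) 1,
      ∑' i, c i * ((t ^ e i - (t * s) ^ e i) * (1 - s) ^ (-ν - 1)) =
        (f t - f (t * s)) * (1 - s) ^ (-ν - 1) := by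
    intro s hs
    have hts : t * s ∈ Icc 0 t := ⟨mul_nonneg ht hs.1.le, mul_le_of_le_one_right ht hs.2⟩
    have hdiff := ((hf t (right_mem_Icc.2 ht)).sub (hf _ hts)).mul_right ((1 - s) ^ (-ν - 1))
    simpa only [← mul_sub, mul_assoc] using hdiff.tsum_eq
  rw [← setIntegral_congr_fun measurableSet_Ioc htsum]
  refine hasSum_integral_of_summable_integral_norm hint (hsum.congr fun i ↦ ?_)
  exact setIntegral_congr_fun measurableSet_Ioc (hnorm i)

end MarchaudIntegral

section MaximumPrinciple

variable {ν t T : ℝ} {f b : ℝ → ℝ}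

lemma marchaudIntegral_nonneg_of_isMaxOn (ht : 0 ≤ t) (hf : IsMaxOn f (Icc 0 t) t) :
    0 ≤ marchaudIntegral ν f t :=
  intervalIntegral.integral_nonneg zero_le_one fun _ hs ↦
    mul_nonneg (sub_nonneg.2 (hf ⟨mul_nonneg ht hs.1, mul_le_of_le_one_right ht hs.2⟩))
      (Real.rpow_nonneg (sub_nonneg.2 hs.2) _)

lemma marchaudIntegral_neg : marchaudIntegral ν (fun s ↦ -f s) t = -marchaudIntegral ν f t := by
  rw [marchaudIntegral, marchaudIntegral, ← intervalIntegral.integral_neg]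
  congr with s
  ring

lemma marchaudIntegral_nonpos_of_isMinOn (ht : 0 ≤ t) (hf : IsMinOn f (Icc 0 t) t) :
    marchaudIntegral ν f t ≤ 0 := by
  have := marchaudIntegral_nonneg_of_isMaxOn (ν := ν) ht hf.neg
  rwa [marchaudIntegral_neg, neg_nonneg] at this

lemma le_one_of_marchaudIntegral_le (hν : 0 ≤ ν) (hT : 0 ≤ T) (hf : ContinuousOn f (Icc 0 T))
    (hb : ∀ t ∈ Icc 0 T, 0 ≤ b t)
    (hsub : ∀ t ∈ Icc 0 T, (1 + b t) * f t + ν * marchaudIntegral ν f t ≤ 1) : f T ≤ 1 := by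
  obtain ⟨t, ht, hmax⟩ := isCompact_Icc.exists_isMaxOn (nonempty_Icc.2 hT) hf
  have hmarchaud := mul_nonneg hν
    (marchaudIntegral_nonneg_of_isMaxOn (ν := ν) ht.1 (hmax.on_subset (Icc_subset_Icc_right ht.2)))
  have hft : f t ≤ 1 := by nlinarith [hb t ht, hsub t ht]
  exact (hmax (right_mem_Icc.2 hT)).trans hft

lemma inv_one_add_le_of_le_marchaudIntegral (hν : 0 ≤ ν) (hT : 0 ≤ T)
    (hf : ContinuousOn f (Icc 0 T)) (hb : ∀ t ∈ Icc 0 T, 0 ≤ b t) (hbT : ∀ t ∈ Icc 0 T, b t ≤ b T)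
    (hsuper : ∀ t ∈ Icc 0 T, 1 ≤ (1 + b t) * f t + ν * marchaudIntegral ν f t) :
    (1 + b T)⁻¹ ≤ f T := by
  obtain ⟨t, ht, hmin⟩ := isCompact_Icc.exists_isMinOn (nonempty_Icc.2 hT) hf
  have hmarchaud := mul_nonpos_of_nonneg_of_nonpos hν
    (marchaudIntegral_nonpos_of_isMinOn (ν := ν) ht.1 (hmin.on_subset (Icc_subset_Icc_right ht.2)))
  have hbt := hb t ht
  calc (1 + b T)⁻¹ ≤ (1 + b t)⁻¹ := by gcongr; exact hbT t ht
    _ ≤ f t := by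
      rw [inv_le_iff_one_le_mul₀' (by positivity)]
      linarith [hsuper t ht]
    _ ≤ f T := hmin (right_mem_Icc.2 hT)

end MaximumPrinciple

section Relaxation

variable {ν a t : ℝ}

lemma hasSum_mul_marchaudIntegral_rpow_mul_natCast (hν₀ : 0 < ν) (hν₁ : ν < 1) (a : ℝ)
    (ht : 0 ≤ t) :
    HasSum
      (fun k : ℕ ↦ ν * (a ^ k / Real.Gamma (ν * k + 1) * marchaudIntegral ν (· ^ (ν * (k : ℝ))) t))
      (1 + Real.Gamma (1 - ν) * (a * t ^ ν) * mittagLeffler ν (a * t ^ ν) -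
        mittagLeffler ν (a * t ^ ν)) := by
  have hΓν : Real.Gamma (1 - ν) ≠ 0 := (Real.Gamma_pos_of_pos (sub_pos.2 hν₁)).ne'
  have hterm (k : ℕ) :
      ν * (a ^ k / Real.Gamma (ν * k + 1) * marchaudIntegral ν (· ^ (ν * (k : ℝ))) t) =
        Real.Gamma (1 - ν) * ((a * t ^ ν) ^ k / Real.Gamma (ν * k + 1 - ν)) -
          (a * t ^ ν) ^ k / Real.Gamma (ν * k + 1) := by
    rw [mul_left_comm, mul_marchaudIntegral_rpow hν₁ (by positivity) ht, mul_pow,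
      Real.rpow_mul_natCast ht]
    field_simp [(Gamma_mul_natCast_add_one_pos hν₀.le k).ne']
  have hsum := ((hasSum_pow_div_Gamma_sub hν₀ (a * t ^ ν)).mul_left (Real.Gamma (1 - ν))).sub
    (hasSum_mittagLeffler hν₀ (a * t ^ ν))
  rw [mul_add, mul_one_div_cancel hΓν, ← mul_assoc] at hsum
  simpa only [hterm] using hsum

lemma mittagLeffler_add_mul_marchaudIntegral (hν₀ : 0 < ν) (hν₁ : ν < 1) (a : ℝ) (ht : 0 ≤ t) :
    mittagLeffler ν (a * t ^ ν) + ν * marchaudIntegral ν (fun s ↦ mittagLeffler ν (a * s ^ ν)) t =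
      1 + Real.Gamma (1 - ν) * (a * t ^ ν) * mittagLeffler ν (a * t ^ ν) := by
  have hseries : ∀ s ∈ Icc 0 t, HasSum (fun k : ℕ ↦ a ^ k / Real.Gamma (ν * k + 1) * s ^ (ν * k))
      (mittagLeffler ν (a * s ^ ν)) := fun s hs ↦
    (hasSum_mittagLeffler hν₀ (a * s ^ ν)).congr_fun fun k ↦ by
      rw [mul_pow, Real.rpow_mul_natCast hs.1, div_mul_eq_mul_div]
  have habs : Summable fun k : ℕ ↦
      |a ^ k / Real.Gamma (ν * k + 1)| * marchaudIntegral ν (· ^ (ν * (k : ℝ))) t := by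
    simpa only [abs_div, abs_pow, abs_of_pos (Gamma_mul_natCast_add_one_pos hν₀.le _)] using
      (summable_mul_left_iff hν₀.ne').1
        (hasSum_mul_marchaudIntegral_rpow_mul_natCast hν₀ hν₁ |a| ht).summable
  have hmarchaud := hasSum_marchaudIntegral hν₁ ht (fun k ↦ by positivity) hseries habs
  rw [(hmarchaud.mul_left ν).unique (hasSum_mul_marchaudIntegral_rpow_mul_natCast hν₀ hν₁ a ht)]
  ring

lemma continuous_mittagLeffler_mul_rpow (hν : 0 < ν) (a : ℝ) :
    Continuous fun t : ℝ ↦ mittagLeffler ν (a * t ^ ν) :=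
  (continuous_mittagLeffler hν).comp
    (continuous_const.mul (Real.continuous_rpow_const hν.le))

lemma mittagLeffler_mul_rpow_mem_Icc (hν₀ : 0 < ν) (hν₁ : ν < 1) (ha : a ≤ 0) (ht : 0 ≤ t) :
    mittagLeffler ν (a * t ^ ν) ∈ Icc (1 + -a * Real.Gamma (1 - ν) * t ^ ν)⁻¹ 1 := by
  have hc : 0 ≤ -a * Real.Gamma (1 - ν) :=
    mul_nonneg (neg_nonneg.2 ha) (Real.Gamma_pos_of_pos (sub_pos.2 hν₁)).le
  have hcont := (continuous_mittagLeffler_mul_rpow hν₀ a).continuousOn (s := Icc 0 t)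
  have hb : ∀ s ∈ Icc 0 t, 0 ≤ -a * Real.Gamma (1 - ν) * s ^ ν := fun s hs ↦
    mul_nonneg hc (Real.rpow_nonneg hs.1 ν)
  have hbt : ∀ s ∈ Icc 0 t,
      -a * Real.Gamma (1 - ν) * s ^ ν ≤ -a * Real.Gamma (1 - ν) * t ^ ν := fun s hs ↦
    mul_le_mul_of_nonneg_left (Real.rpow_le_rpow hs.1 hs.2 hν₀.le) hc
  have heq : ∀ s ∈ Icc 0 t, (1 + -a * Real.Gamma (1 - ν) * s ^ ν) * mittagLeffler ν (a * s ^ ν) +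
      ν * marchaudIntegral ν (fun u ↦ mittagLeffler ν (a * u ^ ν)) s = 1 := fun s hs ↦ by
    linear_combination mittagLeffler_add_mul_marchaudIntegral hν₀ hν₁ a hs.1
  exact ⟨inv_one_add_le_of_le_marchaudIntegral hν₀.le ht hcont hb hbt fun s hs ↦ (heq s hs).ge,
    le_one_of_marchaudIntegral_le (T := t) hν₀.le ht hcont hb fun s hs ↦ (heq s hs).le⟩

end Relaxation

lemma tendsto_one_div_mul_log_of_mem_Icc {f : ℝ → ℝ} {ν c : ℝ} (hν : ν < 1) (hc : 0 ≤ c)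
    (hf : ∀ᶠ t in atTop, f t ∈ Icc (1 + c * t ^ ν)⁻¹ 1) :
    Tendsto (fun t : ℝ ↦ 1 / t * Real.log (f t)) atTop (𝓝 0) := by
  have hlim : Tendsto (fun t : ℝ ↦ -(c * t ^ (-(1 - ν)))) atTop (𝓝 0) := by
    simpa using ((tendsto_rpow_neg_atTop (sub_pos.2 hν)).const_mul c).neg
  refine tendsto_of_tendsto_of_tendsto_of_le_of_le' hlim tendsto_const_nhds ?_ ?_ <;>
    filter_upwards [eventually_gt_atTop 0, hf] with t ht hft <;>
    have hpos : 0 < 1 + c * t ^ ν := by positivity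
  · have hlog : -(c * t ^ ν) ≤ Real.log (f t) := by
      have h₁ := Real.log_le_log (inv_pos.2 hpos) hft.1
      rw [Real.log_inv] at h₁
      linarith [Real.log_le_sub_one_of_pos hpos]
    calc -(c * t ^ (-(1 - ν))) = 1 / t * -(c * t ^ ν) := by
          rw [neg_sub, Real.rpow_sub_one ht.ne']
          ring
      _ ≤ 1 / t * Real.log (f t) := by gcongr
  · exact mul_nonpos_of_nonneg_of_nonpos (by positivity)
      (Real.log_nonpos ((inv_pos.2 hpos).le.trans hft.1) hft.2)

/-- For `ν ∈ (0,1)` and `a ≤ 0`, `lim_{t→∞} (1/t) log E_ν(a t^ν) = 0`. -/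
theorem stmt_18 (ν a : ℝ) (hν : ν ∈ Set.Ioo (0 : ℝ) 1) (ha : a ≤ 0) :
    Filter.Tendsto (fun t : ℝ => (1 / t) * Real.log (mittagLeffler ν (a * t ^ ν)))
      Filter.atTop (nhds 0) := by
  have hc : 0 ≤ -a * Real.Gamma (1 - ν) :=
    mul_nonneg (neg_nonneg.2 ha) (Real.Gamma_pos_of_pos (sub_pos.2 hν.2)).le
  refine tendsto_one_div_mul_log_of_mem_Icc hν.2 hc ?_
  filter_upwards [eventually_ge_atTop 0] with t ht
  exact mittagLeffler_mul_rpow_mem_Icc hν.1 hν.2 ha ht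
end

section
/- Let ν ∈ (0,1) and let E_ν denote the Mittag-Leffler function. Let x, g : (0,∞) → ℝ be functions with x_t → ∞ and g_t → y ∈ ℝ as t → ∞. Then lim_{t→∞} (1/x_t) log E_ν(g_t · x_t^ν) = (max(y,0))^{1/ν} (with the convention 0^{1/ν} = 0). -/
open Filter

/-!
For `s → ∞`, `E_ν(s ^ ν)` lies between multiples of `exp (c s)` for any `c < 1`, by its term of
index about `s / ν`, and any `c > 1`, by comparison with a geometric series. Hence
`log E_ν(w x ^ ν) / x → w ^ (1 / ν)` for fixed `w > 0`.

On the negative axis, the Euler products give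
`Γ(k + 1) / Γ(ν k + 1) = lim_n n ^ ((1 - ν) k) ∏_{j ≤ n} (ν k + 1 + j) / (k + 1 + j)`. Each factor
is the `k`-th moment of a mixture of the point mass at `1` and a Beta law, so the product is the
`k`-th moment of a law on `[0, 1]`. Thus `E_ν` is a limit of moment generating functions of
nonnegative random variables: it is increasing, and Jensen's inequality gives
`E_ν(z) ≥ exp (z / Γ(ν + 1))`. For `w ≤ 0` therefore `0 ≥ log E_ν(w x ^ ν) / x ≥ C w x ^ (ν - 1)`,
which tends to `0`. Finally, monotonicity lets a convergent prefactor `g_t` be trapped between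
fixed values of `w`.
-/

open MeasureTheory Set Topology unitInterval

lemma rpow_le_exp_mul_Gamma_add_one {a s : ℝ} (ha : 0 ≤ a) (hs : 0 ≤ s) :
    s ^ a ≤ Real.exp s * Real.Gamma (a + 1) := by
  have hint : IntegrableOn (fun u => Real.exp (-u) * u ^ a) (Ioi 0) := by
    simpa using Real.GammaIntegral_convergent (s := a + 1) (by positivity)
  have hle : Real.exp (-s) * s ^ a ≤ Real.Gamma (a + 1) := by
    calc Real.exp (-s) * s ^ a = ∫ u in Ioi s, Real.exp (-u) * s ^ a := by
          rw [integral_mul_const, integral_exp_neg_Ioi]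
      _ ≤ ∫ u in Ioi s, Real.exp (-u) * u ^ a := by
          refine setIntegral_mono_on ((integrableOn_exp_neg_Ioi s).mul_const _)
            (hint.mono_set (Ioi_subset_Ioi hs)) measurableSet_Ioi fun u hu => ?_
          gcongr
          exact (mem_Ioi.1 hu).le
      _ ≤ ∫ u in Ioi 0, Real.exp (-u) * u ^ a :=
          setIntegral_mono_set hint
            (ae_restrict_of_forall_mem measurableSet_Ioi fun u (hu : 0 < u) => by positivity)
            (Ioi_subset_Ioi hs).eventuallyLE
      _ = Real.Gamma (a + 1) := by
          rw [Real.Gamma_eq_integral (by positivity), add_sub_cancel_right]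
  rwa [Real.exp_neg, inv_mul_le_iff₀ (Real.exp_pos s)] at hle

lemma rpow_le_div_rpow_mul_exp {a c u : ℝ} (ha : 0 < a) (hc : 0 < c) (hu : 0 ≤ u) :
    u ^ a ≤ (a / c) ^ a * Real.exp (c * u - a) := by
  have hexp : c * u / a ≤ Real.exp (c * u / a - 1) := by
    linarith [Real.add_one_le_exp (c * u / a - 1)]
  calc u ^ a = (a / c) ^ a * (c * u / a) ^ a := by
        rw [← Real.mul_rpow (by positivity) (by positivity)]
        congr 1
        field_simp
    _ ≤ (a / c) ^ a * Real.exp (c * u / a - 1) ^ a := by gcongr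
    _ = (a / c) ^ a * Real.exp (c * u - a) := by
        rw [← Real.exp_mul]
        congr 2
        field_simp

lemma Gamma_add_one_le_div_rpow_mul_exp {a c : ℝ} (ha : 0 < a) (hc : c ∈ Ioo (0 : ℝ) 1) :
    Real.Gamma (a + 1) ≤ (a / c) ^ a * Real.exp (-a) / (1 - c) := by
  obtain ⟨hc0, hc1⟩ := hc
  have hint : IntegrableOn (fun u => Real.exp (-u) * u ^ a) (Ioi 0) := by
    simpa using Real.GammaIntegral_convergent (s := a + 1) (by positivity)
  calc Real.Gamma (a + 1) = ∫ u in Ioi 0, Real.exp (-u) * u ^ a := by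
        rw [Real.Gamma_eq_integral (by positivity), add_sub_cancel_right]
    _ ≤ ∫ u in Ioi 0, (a / c) ^ a * Real.exp (-a) * Real.exp ((c - 1) * u) := by
        refine setIntegral_mono_on hint ((integrableOn_exp_mul_Ioi (by linarith) 0).const_mul _)
          measurableSet_Ioi fun u hu => ?_
        calc Real.exp (-u) * u ^ a
            ≤ Real.exp (-u) * ((a / c) ^ a * Real.exp (c * u - a)) := by
              gcongr
              exact rpow_le_div_rpow_mul_exp ha hc0 (mem_Ioi.1 hu).le
          _ = (a / c) ^ a * (Real.exp (-u) * Real.exp (c * u - a)) := by ring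
          _ = (a / c) ^ a * (Real.exp (-a) * Real.exp ((c - 1) * u)) := by
              rw [← Real.exp_add, ← Real.exp_add]
              ring_nf
          _ = _ := by ring
    _ = (a / c) ^ a * Real.exp (-a) / (1 - c) := by
        rw [integral_const_mul, integral_exp_mul_Ioi (by linarith), mul_zero, Real.exp_zero,
          ← neg_sub 1 c, neg_div_neg_eq, mul_one_div]

lemma GammaSeq_pos {s : ℝ} (hs : 0 < s) {n : ℕ} (hn : n ≠ 0) : 0 < Real.GammaSeq s n := by
  have : 0 < ∏ j ∈ Finset.range (n + 1), (s + (j : ℝ)) := Finset.prod_pos fun j _ => by positivity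
  rw [Real.GammaSeq]
  positivity

lemma GammaSeq_div_GammaSeq (s t : ℝ) {n : ℕ} (hn : n ≠ 0) :
    Real.GammaSeq s n / Real.GammaSeq t n
      = (n : ℝ) ^ (s - t) * ∏ j ∈ Finset.range (n + 1), (t + j) / (s + j) := by
  have hn_pos : (0 : ℝ) < n := by positivity
  rw [Real.GammaSeq, Real.GammaSeq, Finset.prod_div_distrib, Real.rpow_sub hn_pos]
  field_simp

lemma add_div_add_le_rpow_sub {s t m : ℝ} (ht : 0 ≤ t) (hts : t ≤ s) (hm : 0 < m) :
    (s + (m + 1)) / (t + (m + 1)) ≤ ((m + 1) / m) ^ (s - t) := by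
  have hsub : 0 ≤ s - t := sub_nonneg.2 hts
  have hlog : 1 / (m + 1) ≤ Real.log ((m + 1) / m) := by
    convert! Real.one_sub_inv_le_log_of_pos (x := (m + 1) / m) (by positivity) using 1
    field_simp
    ring
  calc (s + (m + 1)) / (t + (m + 1)) = (s - t) / (t + (m + 1)) + 1 := by
        field_simp
        ring
    _ ≤ 1 / (m + 1) * (s - t) + 1 := by
        rw [one_div_mul_eq_div]
        grw [div_le_div_of_nonneg_left hsub (by positivity) (le_add_of_nonneg_left ht)]
    _ ≤ Real.exp (1 / (m + 1) * (s - t)) := Real.add_one_le_exp _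
    _ ≤ Real.exp (Real.log ((m + 1) / m) * (s - t)) := by gcongr
    _ = ((m + 1) / m) ^ (s - t) := (Real.rpow_def_of_pos (by positivity) _).symm

lemma monotone_GammaSeq_div_GammaSeq {s t : ℝ} (ht : 0 < t) (hts : t ≤ s) :
    Monotone fun n : ℕ => Real.GammaSeq s (n + 1) / Real.GammaSeq t (n + 1) := by
  refine monotone_nat_of_le_succ fun n => ?_
  have hs : 0 < s := ht.trans_le hts
  have hratio := add_div_add_le_rpow_sub ht.le hts (m := (n + 1 : ℕ)) (by positivity)
  have hprod : 0 ≤ ∏ j ∈ Finset.range (n + 1 + 1), (t + (j : ℝ)) / (s + j) :=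
    Finset.prod_nonneg fun j _ => by positivity
  rw [← Nat.cast_succ, Nat.succ_eq_add_one, Real.div_rpow (by positivity) (by positivity),
    div_le_div_iff₀ (by positivity) (by positivity)] at hratio
  rw [GammaSeq_div_GammaSeq _ _ (by positivity), GammaSeq_div_GammaSeq _ _ (by positivity),
    Finset.prod_range_succ _ (n + 1 + 1), mul_left_comm, mul_comm, ← mul_div_assoc]
  refine mul_le_mul_of_nonneg_left ?_ hprod
  rw [le_div_iff₀ (by positivity)]
  linarith

lemma tendsto_GammaSeq_div_GammaSeq (s : ℝ) {t : ℝ} (ht : 0 < t) :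
    Tendsto (fun n => Real.GammaSeq s n / Real.GammaSeq t n) atTop
      (𝓝 (Real.Gamma s / Real.Gamma t)) :=
  (Real.GammaSeq_tendsto_Gamma s).div (Real.GammaSeq_tendsto_Gamma t) (Real.Gamma_pos_of_pos ht).ne'

lemma GammaSeq_div_GammaSeq_le {s t : ℝ} (ht : 0 < t) (hts : t ≤ s) (n : ℕ) :
    Real.GammaSeq s (n + 1) / Real.GammaSeq t (n + 1) ≤ Real.Gamma s / Real.Gamma t :=
  (monotone_GammaSeq_div_GammaSeq ht hts).ge_of_tendsto
    ((tendsto_add_atTop_iff_nat 1).2 (tendsto_GammaSeq_div_GammaSeq s ht)) n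

/-- `m` is the sequence of moments of a probability measure on `[0, 1]`; in particular `m 0 = 1`.
Encoding the measure on the subtype `I` makes every continuous function integrable and turns
multiplication of moment sequences into convolution in the monoid `I`. -/
def IsHausdorffMomentSeq (m : ℕ → ℝ) : Prop :=
  ∃ μ : Measure I, IsProbabilityMeasure μ ∧ ∀ k, m k = ∫ x, (x : ℝ) ^ k ∂μ

lemma integrable_unitInterval_of_continuous {f : I → ℝ} (hf : Continuous f) (μ : Measure I)
    [IsFiniteMeasure μ] : Integrable f μ :=
  hf.integrable_of_hasCompactSupport (HasCompactSupport.of_compactSpace f)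

namespace IsHausdorffMomentSeq

variable {m m₁ m₂ : ℕ → ℝ}

lemma one : IsHausdorffMomentSeq fun _ => 1 :=
  ⟨Measure.dirac 1, inferInstance, fun k => by simp⟩

lemma mul (h₁ : IsHausdorffMomentSeq m₁) (h₂ : IsHausdorffMomentSeq m₂) :
    IsHausdorffMomentSeq fun k => m₁ k * m₂ k := by
  obtain ⟨μ, _, hμ⟩ := h₁
  obtain ⟨ρ, _, hρ⟩ := h₂
  refine ⟨μ ∗ₘ ρ, inferInstance, fun k => ?_⟩
  rw [integral_mconv (integrable_unitInterval_of_continuous (by fun_prop) _)]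
  simp only [hμ, hρ, Icc.coe_mul, mul_pow, integral_const_mul, integral_mul_const]

lemma prod {ι : Type*} (s : Finset ι) {f : ι → ℕ → ℝ} (hf : ∀ i ∈ s, IsHausdorffMomentSeq (f i)) :
    IsHausdorffMomentSeq fun k => ∏ i ∈ s, f i k := by
  simpa only [Finset.prod_fn] using
    Finset.prod_induction f IsHausdorffMomentSeq (fun _ _ => mul) one hf

lemma convexCombo (h₁ : IsHausdorffMomentSeq m₁) (h₂ : IsHausdorffMomentSeq m₂) (p : I) :
    IsHausdorffMomentSeq fun k => p * m₁ k + (1 - p) * m₂ k := by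
  obtain ⟨μ, _, hμ⟩ := h₁
  obtain ⟨ρ, _, hρ⟩ := h₂
  refine ⟨toNNReal p • μ + toNNReal (unitInterval.symm p) • ρ, inferInstance, fun k => ?_⟩
  rw [integral_add_measure (integrable_unitInterval_of_continuous (by fun_prop) _)
    (integrable_unitInterval_of_continuous (by fun_prop) _)]
  simp only [integral_smul_nnreal_measure, hμ, hρ, NNReal.smul_def, coe_toNNReal, coe_symm_eq,
    smul_eq_mul]

-- The measure is the law `Beta(b, 1)` of `U ^ (1 / b)` with `U` uniform on `[0, 1]`.
lemma div_natCast_add {b : ℝ} (hb : 0 < b) : IsHausdorffMomentSeq fun k => b / (k + b) := by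
  let f : I → I := fun u => ⟨(u : ℝ) ^ b⁻¹, Real.rpow_nonneg u.2.1 _,
    Real.rpow_le_one u.2.1 u.2.2 (by positivity)⟩
  have hf : Continuous f :=
    (continuous_subtype_val.rpow_const fun _ => Or.inr (by positivity)).subtype_mk _
  refine ⟨volume.map f, Measure.isProbabilityMeasure_map hf.aemeasurable, fun k => ?_⟩
  rw [integral_map hf.aemeasurable (by fun_prop)]
  symm
  calc ∫ u : I, (f u : ℝ) ^ k = ∫ u : I, (u : ℝ) ^ (b⁻¹ * k) := by
        congr 1 with u
        rw [Real.rpow_mul u.2.1, Real.rpow_natCast]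
    _ = ∫ u in (0 : ℝ)..1, u ^ (b⁻¹ * k) := by
        rw [intervalIntegral.integral_of_le (zero_le_one' ℝ), ← integral_Icc_eq_integral_Ioc]
        exact integral_subtype_comap (measurableSet_Icc (a := (0 : ℝ)) (b := 1))
          (· ^ (b⁻¹ * k))
    _ = b / (k + b) := by
        have hexp : 0 ≤ b⁻¹ * (k : ℝ) := by positivity
        rw [integral_rpow (Or.inl (by linarith)), Real.one_rpow,
          Real.zero_rpow (by positivity)]
        field_simp
        simp

lemma mul_natCast_add_div (p : I) {b : ℝ} (hb : 0 < b) :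
    IsHausdorffMomentSeq fun k => (p * k + b) / (k + b) := by
  convert! convexCombo one (div_natCast_add hb) p using 2 with k
  field_simp
  ring

lemma exists_hasSum_eq_integral_exp (h : IsHausdorffMomentSeq m) :
    ∃ μ : Measure I, IsProbabilityMeasure μ ∧ m 1 = ∫ x, (x : ℝ) ∂μ ∧
      ∀ z : ℝ, HasSum (fun k : ℕ => m k * z ^ k / k.factorial) (∫ x, Real.exp (z * x) ∂μ) := by
  obtain ⟨μ, hprob, hμ⟩ := h
  refine ⟨μ, hprob, by simp [hμ 1], fun z => ?_⟩
  let F : ℕ → I → ℝ := fun k x => (z * x) ^ k / k.factorial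
  have hF_int (k : ℕ) : Integrable (F k) μ :=
    integrable_unitInterval_of_continuous (by fun_prop) μ
  have hF_norm (k : ℕ) (x : I) : ‖F k x‖ ≤ |z| ^ k / k.factorial := by
    rw [Real.norm_eq_abs, abs_div, abs_pow, abs_mul, Nat.abs_cast, abs_of_nonneg x.2.1]
    gcongr
    · exact mul_nonneg (abs_nonneg z) x.2.1
    · exact mul_le_of_le_one_right (abs_nonneg z) x.2.2
  have hF_sum : Summable fun k => ∫ x, ‖F k x‖ ∂μ := by
    refine Summable.of_nonneg_of_le (fun k => by positivity) (fun k => ?_)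
      (Real.summable_pow_div_factorial |z|)
    simpa using integral_mono (hF_int k).norm (integrable_const _) (hF_norm k)
  convert! hasSum_integral_of_summable_integral_norm hF_int hF_sum using 1
  · ext k
    simp only [F, hμ, mul_pow, integral_div, integral_const_mul, mul_comm]
  · simp only [F, Real.exp_eq_exp_ℝ, NormedSpace.exp_eq_tsum_div]

lemma monotone_tsum (h : IsHausdorffMomentSeq m) :
    Monotone fun z : ℝ => ∑' k : ℕ, m k * z ^ k / k.factorial := by
  obtain ⟨μ, _, -, hsum⟩ := h.exists_hasSum_eq_integral_exp
  intro z w hzw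
  simp only [(hsum _).tsum_eq]
  refine integral_mono (integrable_unitInterval_of_continuous (by fun_prop) μ)
    (integrable_unitInterval_of_continuous (by fun_prop) μ) fun x => ?_
  have := x.2.1
  dsimp only
  gcongr

lemma exp_le_tsum (h : IsHausdorffMomentSeq m) (z : ℝ) :
    Real.exp (m 1 * z) ≤ ∑' k : ℕ, m k * z ^ k / k.factorial := by
  obtain ⟨μ, _, hmean, hsum⟩ := h.exists_hasSum_eq_integral_exp
  rw [(hsum z).tsum_eq, hmean, mul_comm, ← integral_const_mul]
  exact convexOn_exp.map_integral_le Real.continuous_exp.continuousOn isClosed_univ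
    (ae_of_all _ fun _ => mem_univ _) (integrable_unitInterval_of_continuous (by fun_prop) μ)
    (integrable_unitInterval_of_continuous (by fun_prop) μ)

end IsHausdorffMomentSeq

lemma tendsto_inv_mul_log_of_exp_bounds {f : ℝ → ℝ} {L : ℝ}
    (hlower : ∀ c < L, ∃ C > 0, ∀ᶠ s in atTop, C * Real.exp (c * s) ≤ f s)
    (hupper : ∀ c > L, ∃ C > 0, ∀ᶠ s in atTop, f s ≤ C * Real.exp (c * s)) :
    Tendsto (fun s => s⁻¹ * Real.log (f s)) atTop (𝓝 L) := by
  have hlim (C c : ℝ) : Tendsto (fun s => s⁻¹ * Real.log C + c) atTop (𝓝 c) := by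
    simpa using (tendsto_inv_atTop_zero.mul_const (Real.log C)).add_const c
  have hlog {C c s : ℝ} (hC : 0 < C) (hs : 0 < s) :
      s⁻¹ * Real.log (C * Real.exp (c * s)) = s⁻¹ * Real.log C + c := by
    rw [Real.log_mul hC.ne' (Real.exp_ne_zero _), Real.log_exp]
    field_simp
  obtain ⟨C₀, hC₀, hpos⟩ := hlower (L - 1) (by linarith)
  refine tendsto_order.2 ⟨fun b hb => ?_, fun b hb => ?_⟩
  · obtain ⟨c, hbc, hcL⟩ := exists_between hb
    obtain ⟨C, hC, hf⟩ := hlower c hcL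
    filter_upwards [hf, (hlim C c).eventually_const_lt hbc, eventually_gt_atTop 0]
      with s hfs hbs hs
    refine hbs.trans_le ?_
    rw [← hlog hC hs]
    gcongr
  · obtain ⟨c, hLc, hcb⟩ := exists_between hb
    obtain ⟨C, hC, hf⟩ := hupper c hLc
    filter_upwards [hf, hpos, (hlim C c).eventually_lt_const hcb, eventually_gt_atTop 0]
      with s hfs hfs_pos hbs hs
    refine lt_of_le_of_lt ?_ hbs
    rw [← hlog hC hs]
    have : 0 < f s := hfs_pos.trans_lt' (by positivity)
    gcongr

lemma tendsto_prod_nhds_of_monotone {α β γ : Type*} [LinearOrder β] [TopologicalSpace β]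
    [OrderTopology β] [DenselyOrdered β] [NoMinOrder β] [NoMaxOrder β] [LinearOrder γ]
    [TopologicalSpace γ] [OrderTopology γ] {F : α → β → γ} {φ : β → γ} {l : Filter α} {y : β}
    (hmono : ∀ᶠ x in l, Monotone (F x)) (hF : ∀ w, Tendsto (F · w) l (𝓝 (φ w)))
    (hφ : ContinuousAt φ y) : Tendsto (fun q : α × β => F q.1 q.2) (l ×ˢ 𝓝 y) (𝓝 (φ y)) := by
  refine tendsto_order.2 ⟨fun b hb => ?_, fun b hb => ?_⟩
  · obtain ⟨w, hwy, hbw⟩ : ∃ w < y, b < φ w :=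
      (eventually_mem_nhdsWithin.and
        ((hφ.eventually_const_lt hb).filter_mono nhdsWithin_le_nhds : ∀ᶠ w in 𝓝[<] y, _)).exists
    filter_upwards [(hmono.and ((hF w).eventually_const_lt hbw)).prod_mk (lt_mem_nhds hwy)]
      with q ⟨⟨hq_mono, hq⟩, hwq⟩
    exact hq.trans_le (hq_mono hwq.le)
  · obtain ⟨w, hyw, hwb⟩ : ∃ w > y, φ w < b :=
      (eventually_mem_nhdsWithin.and
        ((hφ.eventually_lt_const hb).filter_mono nhdsWithin_le_nhds : ∀ᶠ w in 𝓝[>] y, _)).exists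
    filter_upwards [(hmono.and ((hF w).eventually_lt_const hwb)).prod_mk (gt_mem_nhds hyw)]
      with q ⟨⟨hq_mono, hq⟩, hqw⟩
    exact (hq_mono hqw.le).trans_lt hq

section MittagLeffler

variable {ν : ℝ}

lemma rpow_pow_div_Gamma_le (hν : 0 ≤ ν) {s c : ℝ} (hs : 0 ≤ s) (hc : 0 < c) (k : ℕ) :
    (s ^ ν) ^ k / Real.Gamma (ν * k + 1) ≤ Real.exp (c * s) * (c ^ (-ν)) ^ k := by
  have hΓ : 0 < Real.Gamma (ν * k + 1) := Real.Gamma_pos_of_pos (by positivity)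
  have hscale : (s ^ ν) ^ k = (c * s) ^ (ν * k) * (c ^ (-ν)) ^ k := by
    rw [Real.rpow_mul (by positivity), Real.rpow_natCast, ← mul_pow, Real.mul_rpow hc.le hs,
      mul_right_comm, ← Real.rpow_add hc, add_neg_cancel, Real.rpow_zero, one_mul]
  rw [hscale, div_le_iff₀ hΓ, mul_right_comm]
  gcongr
  exact rpow_le_exp_mul_Gamma_add_one (by positivity) (by positivity)

lemma summable_mittagLeffler (hν : 0 < ν) (x : ℝ) :
    Summable fun k : ℕ => x ^ k / Real.Gamma (ν * k + 1) := by
  have hx : (|x| ^ ν⁻¹) ^ ν = |x| := Real.rpow_inv_rpow (abs_nonneg x) hν.ne'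
  have hratio : (2 : ℝ) ^ (-ν) < 1 :=
    Real.rpow_lt_one_of_one_lt_of_neg one_lt_two (neg_lt_zero.2 hν)
  refine Summable.of_norm_bounded
    ((summable_geometric_of_lt_one (by positivity) hratio).mul_left
      (Real.exp (2 * |x| ^ ν⁻¹))) fun k => ?_
  rw [norm_div, norm_pow, Real.norm_eq_abs,
    Real.norm_of_nonneg (Real.Gamma_pos_of_pos (by positivity)).le]
  simpa only [hx] using
    rpow_pow_div_Gamma_le hν.le (s := |x| ^ ν⁻¹) (by positivity) two_pos k

lemma mittagLeffler_zero (ν : ℝ) : mittagLeffler ν 0 = 1 := by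
  rw [mittagLeffler, tsum_eq_single 0 fun k hk => by simp [hk]]
  simp

lemma mittagLeffler_rpow_le (hν : 0 < ν) {s c : ℝ} (hs : 0 ≤ s) (hc : 1 < c) :
    mittagLeffler ν (s ^ ν) ≤ (1 - c ^ (-ν))⁻¹ * Real.exp (c * s) := by
  have hc0 : 0 < c := by positivity
  have hratio : c ^ (-ν) < 1 := Real.rpow_lt_one_of_one_lt_of_neg hc (neg_lt_zero.2 hν)
  have hgeom := (hasSum_geometric_of_lt_one (by positivity) hratio).mul_left (Real.exp (c * s))
  rw [mul_comm]
  exact hasSum_le (rpow_pow_div_Gamma_le hν.le hs hc0) (summable_mittagLeffler hν _).hasSum hgeom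

lemma mul_exp_le_rpow_div_Gamma_add_one {a s c : ℝ} (ha : 0 < a) (has : a ≤ s) (hc : c < 1) :
    (1 - Real.exp (c - 1)) * Real.exp (c * a) ≤ s ^ a / Real.Gamma (a + 1) := by
  have hq : Real.exp (c - 1) < 1 := Real.exp_lt_one_iff.2 (by linarith)
  have hq' : 0 < 1 - Real.exp (c - 1) := sub_pos.2 hq
  have hΓ := Gamma_add_one_le_div_rpow_mul_exp ha ⟨Real.exp_pos _, hq⟩
  have hpow : (a / Real.exp (c - 1)) ^ a * Real.exp (-a) = a ^ a * Real.exp (-(c * a)) := by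
    rw [Real.div_rpow ha.le (Real.exp_pos _).le, ← Real.exp_mul, div_eq_mul_inv, ← Real.exp_neg,
      mul_assoc, ← Real.exp_add]
    ring_nf
  rw [hpow] at hΓ
  rw [le_div_iff₀ (Real.Gamma_pos_of_pos (by positivity))]
  calc (1 - Real.exp (c - 1)) * Real.exp (c * a) * Real.Gamma (a + 1)
      ≤ (1 - Real.exp (c - 1)) * Real.exp (c * a)
          * (a ^ a * Real.exp (-(c * a)) / (1 - Real.exp (c - 1))) := by gcongr
    _ = a ^ a := by
        rw [Real.exp_neg]
        field_simp
    _ ≤ s ^ a := by gcongr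

lemma mul_exp_le_mittagLeffler_rpow (hν : 0 < ν) {s c : ℝ} (hs : ν ≤ s) (hc : c < 1) :
    (1 - Real.exp (c - 1)) * Real.exp (-ν) * Real.exp (c * s) ≤ mittagLeffler ν (s ^ ν) := by
  have hs0 : 0 < s := hν.trans_le hs
  have hq : 0 < 1 - Real.exp (c - 1) := sub_pos.2 (Real.exp_lt_one_iff.2 (by linarith))
  set k := ⌊s / ν⌋₊
  have hk_pos : 0 < k := Nat.floor_pos.2 ((one_le_div hν).2 hs)
  have hk_le : ν * k ≤ s := by
    rw [mul_comm, ← le_div_iff₀ hν]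
    exact Nat.floor_le (by positivity)
  have hk_gt : s < ν * k + ν := by
    have := Nat.lt_floor_add_one (s / ν)
    rw [div_lt_iff₀ hν] at this
    linarith
  calc (1 - Real.exp (c - 1)) * Real.exp (-ν) * Real.exp (c * s)
      ≤ (1 - Real.exp (c - 1)) * Real.exp (c * (ν * k)) := by
        rw [mul_assoc, ← Real.exp_add]
        gcongr
        nlinarith
    _ ≤ s ^ (ν * k) / Real.Gamma (ν * k + 1) :=
        mul_exp_le_rpow_div_Gamma_add_one (by positivity) hk_le hc
    _ = (s ^ ν) ^ k / Real.Gamma (ν * k + 1) := by rw [Real.rpow_mul hs0.le, Real.rpow_natCast]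
    _ ≤ mittagLeffler ν (s ^ ν) :=
        (summable_mittagLeffler hν _).le_tsum k fun j _ =>
          div_nonneg (by positivity) (Real.Gamma_pos_of_pos (by positivity)).le

lemma tendsto_inv_mul_log_mittagLeffler_rpow (hν : 0 < ν) :
    Tendsto (fun s => s⁻¹ * Real.log (mittagLeffler ν (s ^ ν))) atTop (𝓝 1) := by
  refine tendsto_inv_mul_log_of_exp_bounds (fun c hc => ?_) (fun c hc => ?_)
  · have hq : 0 < 1 - Real.exp (c - 1) := sub_pos.2 (Real.exp_lt_one_iff.2 (by linarith))
    refine ⟨(1 - Real.exp (c - 1)) * Real.exp (-ν), by positivity, ?_⟩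
    filter_upwards [eventually_ge_atTop ν] with s hs
    exact mul_exp_le_mittagLeffler_rpow hν hs hc
  · have hratio : c ^ (-ν) < 1 := Real.rpow_lt_one_of_one_lt_of_neg hc (neg_lt_zero.2 hν)
    refine ⟨(1 - c ^ (-ν))⁻¹, inv_pos.2 (sub_pos.2 hratio), ?_⟩
    filter_upwards [eventually_ge_atTop 0] with s hs
    exact mittagLeffler_rpow_le hν hs hc

/-- Approximation of the Mittag-Leffler function `E_ν`: in the `k`-th coefficient, written as
`Γ(k + 1) / Γ(ν k + 1) / k!`, both Gamma values are replaced by their Euler approximants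
`Real.GammaSeq`. The index is shifted by one because `Real.GammaSeq s 0 = 0` for `s ≠ 0`. -/
noncomputable def mittagLefflerApprox (ν : ℝ) (n : ℕ) (z : ℝ) : ℝ :=
  ∑' k : ℕ, Real.GammaSeq (k + 1) (n + 1) / Real.GammaSeq (ν * k + 1) (n + 1) * z ^ k / k.factorial

lemma tendsto_mittagLefflerApprox (hν : ν ∈ Ioc (0 : ℝ) 1) (z : ℝ) :
    Tendsto (mittagLefflerApprox ν · z) atTop (𝓝 (mittagLeffler ν z)) := by
  obtain ⟨hν0, hν1⟩ := hν
  have hpos (k : ℕ) : 0 < ν * k + 1 := by positivity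
  have hle (k : ℕ) : ν * k + 1 ≤ k + 1 := by
    grw [mul_le_of_le_one_left k.cast_nonneg hν1]
  refine tendsto_tsum_of_dominated_convergence (summable_mittagLeffler hν0 |z|)
    (fun k => ?_) (.of_forall fun n k => ?_)
  · have hratio := (tendsto_add_atTop_iff_nat 1).2 (tendsto_GammaSeq_div_GammaSeq (k + 1) (hpos k))
    convert! (hratio.mul_const (z ^ k)).div_const (k.factorial : ℝ) using 2
    rw [Real.Gamma_nat_eq_factorial]
    field_simp
  · have hbound := GammaSeq_div_GammaSeq_le (hpos k) (hle k) n
    have hnonneg : 0 ≤ Real.GammaSeq (k + 1) (n + 1) / Real.GammaSeq (ν * k + 1) (n + 1) :=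
      div_nonneg (GammaSeq_pos (by positivity) n.succ_ne_zero).le
        (GammaSeq_pos (hpos k) n.succ_ne_zero).le
    rw [Real.Gamma_nat_eq_factorial] at hbound
    rw [norm_div, norm_mul, norm_pow, Real.norm_of_nonneg hnonneg, Real.norm_eq_abs,
      Real.norm_natCast]
    grw [hbound]
    apply le_of_eq
    field_simp

lemma exists_isHausdorffMomentSeq_eq_GammaSeq_div (p : I) {n : ℕ} (hn : n ≠ 0) :
    ∃ m, IsHausdorffMomentSeq m ∧ ∀ k : ℕ,
      Real.GammaSeq (k + 1) n / Real.GammaSeq (p * k + 1) n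
        = m k * ((n : ℝ) ^ (1 - p : ℝ)) ^ k := by
  refine ⟨_, IsHausdorffMomentSeq.prod (Finset.range (n + 1)) fun j _ =>
    IsHausdorffMomentSeq.mul_natCast_add_div p (b := 1 + j) (by positivity), fun k => ?_⟩
  rw [GammaSeq_div_GammaSeq _ _ hn, mul_comm, ← Real.rpow_natCast, ← Real.rpow_mul n.cast_nonneg]
  congr 1
  · simp only [add_assoc]
  · ring_nf

lemma exists_mittagLefflerApprox_eq_tsum (p : I) (n : ℕ) :
    ∃ m, IsHausdorffMomentSeq m ∧ ∃ c ≥ 0,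
      Real.GammaSeq 2 (n + 1) / Real.GammaSeq (p + 1) (n + 1) = m 1 * c ∧
      ∀ z, mittagLefflerApprox p n z = ∑' k : ℕ, m k * (c * z) ^ k / k.factorial := by
  obtain ⟨m, hm, hratio⟩ := exists_isHausdorffMomentSeq_eq_GammaSeq_div p n.succ_ne_zero
  refine ⟨m, hm, ((n + 1 : ℕ) : ℝ) ^ (1 - p : ℝ), by positivity, ?_,
    fun z => tsum_congr fun k => ?_⟩
  · simpa [one_add_one_eq_two] using hratio 1
  · rw [hratio, mul_pow, mul_assoc]

lemma monotone_mittagLefflerApprox (hν : ν ∈ Icc (0 : ℝ) 1) (n : ℕ) :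
    Monotone (mittagLefflerApprox ν n) := by
  obtain ⟨m, hm, c, hc, -, heq⟩ := exists_mittagLefflerApprox_eq_tsum ⟨ν, hν⟩ n
  intro z w hzw
  rw [heq, heq]
  exact hm.monotone_tsum (by gcongr)

lemma exp_le_mittagLefflerApprox (hν : ν ∈ Icc (0 : ℝ) 1) (n : ℕ) (z : ℝ) :
    Real.exp (Real.GammaSeq 2 (n + 1) / Real.GammaSeq (ν + 1) (n + 1) * z)
      ≤ mittagLefflerApprox ν n z := by
  obtain ⟨m, hm, c, -, hmean, heq⟩ := exists_mittagLefflerApprox_eq_tsum ⟨ν, hν⟩ n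
  rw [heq, hmean, mul_assoc]
  exact hm.exp_le_tsum (c * z)

lemma monotone_mittagLeffler (hν : ν ∈ Ioc (0 : ℝ) 1) : Monotone (mittagLeffler ν) :=
  fun z w hzw => le_of_tendsto_of_tendsto' (tendsto_mittagLefflerApprox hν z)
    (tendsto_mittagLefflerApprox hν w)
    fun n => monotone_mittagLefflerApprox (Ioc_subset_Icc_self hν) n hzw

lemma exp_div_Gamma_le_mittagLeffler (hν : ν ∈ Ioc (0 : ℝ) 1) (z : ℝ) :
    Real.exp (z / Real.Gamma (ν + 1)) ≤ mittagLeffler ν z := by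
  have hmean := (tendsto_add_atTop_iff_nat 1).2
    (tendsto_GammaSeq_div_GammaSeq 2 (add_pos hν.1 one_pos))
  rw [Real.Gamma_two] at hmean
  rw [← one_div_mul_eq_div]
  exact le_of_tendsto_of_tendsto' ((hmean.mul_const z).rexp) (tendsto_mittagLefflerApprox hν z)
    fun n => exp_le_mittagLefflerApprox (Ioc_subset_Icc_self hν) n z

lemma mittagLeffler_pos (hν : ν ∈ Ioc (0 : ℝ) 1) (z : ℝ) : 0 < mittagLeffler ν z :=
  (Real.exp_pos _).trans_le (exp_div_Gamma_le_mittagLeffler hν z)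

lemma tendsto_inv_mul_log_mittagLeffler_of_pos (hν : 0 < ν) {w : ℝ} (hw : 0 < w) :
    Tendsto (fun x => x⁻¹ * Real.log (mittagLeffler ν (w * x ^ ν))) atTop (𝓝 (w ^ ν⁻¹)) := by
  have hc : 0 < w ^ ν⁻¹ := by positivity
  have hscaled := ((tendsto_inv_mul_log_mittagLeffler_rpow hν).comp
    (tendsto_id.const_mul_atTop hc)).const_mul (w ^ ν⁻¹)
  rw [mul_one] at hscaled
  refine hscaled.congr' ?_
  filter_upwards [eventually_gt_atTop 0] with x hx
  simp only [Function.comp_apply, id_eq]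
  rw [Real.mul_rpow hc.le hx.le, Real.rpow_inv_rpow hw.le hν.ne', mul_inv, ← mul_assoc,
    mul_inv_cancel_left₀ hc.ne']

lemma tendsto_inv_mul_log_mittagLeffler_of_nonpos (hν : ν ∈ Ioo (0 : ℝ) 1) {w : ℝ} (hw : w ≤ 0) :
    Tendsto (fun x => x⁻¹ * Real.log (mittagLeffler ν (w * x ^ ν))) atTop (𝓝 0) := by
  have hν' : ν ∈ Ioc (0 : ℝ) 1 := Ioo_subset_Ioc_self hν
  have hlower : Tendsto (fun x : ℝ => w / Real.Gamma (ν + 1) * x ^ (-(1 - ν))) atTop (𝓝 0) := by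
    simpa using (tendsto_rpow_neg_atTop (sub_pos.2 hν.2)).const_mul (w / Real.Gamma (ν + 1))
  refine tendsto_of_tendsto_of_tendsto_of_le_of_le' hlower tendsto_const_nhds ?_ ?_
  · filter_upwards [eventually_gt_atTop 0] with x hx
    have hlog := (Real.le_log_iff_exp_le (mittagLeffler_pos hν' _)).2
      (exp_div_Gamma_le_mittagLeffler hν' (w * x ^ ν))
    calc w / Real.Gamma (ν + 1) * x ^ (-(1 - ν)) = x⁻¹ * (w * x ^ ν / Real.Gamma (ν + 1)) := by
          rw [neg_sub, Real.rpow_sub_one hx.ne']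
          ring
      _ ≤ x⁻¹ * Real.log (mittagLeffler ν (w * x ^ ν)) := by gcongr
  · filter_upwards [eventually_gt_atTop 0] with x hx
    have hle_one : mittagLeffler ν (w * x ^ ν) ≤ 1 := by
      rw [← mittagLeffler_zero ν]
      exact monotone_mittagLeffler hν' (mul_nonpos_of_nonpos_of_nonneg hw (by positivity))
    exact mul_nonpos_of_nonneg_of_nonpos (by positivity)
      (Real.log_nonpos (mittagLeffler_pos hν' _).le hle_one)

lemma tendsto_inv_mul_log_mittagLeffler (hν : ν ∈ Ioo (0 : ℝ) 1) (w : ℝ) :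
    Tendsto (fun x => x⁻¹ * Real.log (mittagLeffler ν (w * x ^ ν))) atTop
      (𝓝 (max w 0 ^ ν⁻¹)) := by
  rcases le_or_gt w 0 with hw | hw
  · rw [max_eq_right hw, Real.zero_rpow (inv_ne_zero hν.1.ne')]
    exact tendsto_inv_mul_log_mittagLeffler_of_nonpos hν hw
  · rw [max_eq_left hw.le]
    exact tendsto_inv_mul_log_mittagLeffler_of_pos hν.1 hw

end MittagLeffler

theorem stmt_19_general {ι : Type*} {l : Filter ι} {ν : ℝ} (hν : ν ∈ Ioo (0 : ℝ) 1) {x g : ι → ℝ}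
    {y : ℝ} (hx : Tendsto x l atTop) (hg : Tendsto g l (𝓝 y)) :
    Tendsto (fun t => 1 / x t * Real.log (mittagLeffler ν (g t * x t ^ ν))) l
      (𝓝 (max y 0 ^ (1 / ν))) := by
  have hν' : ν ∈ Ioc (0 : ℝ) 1 := Ioo_subset_Ioc_self hν
  have hmono : ∀ᶠ x : ℝ in atTop,
      Monotone fun w => x⁻¹ * Real.log (mittagLeffler ν (w * x ^ ν)) := by
    filter_upwards [eventually_gt_atTop 0] with x hx w₁ w₂ hw
    have hpos := mittagLeffler_pos hν' (w₁ * x ^ ν)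
    have hle : mittagLeffler ν (w₁ * x ^ ν) ≤ mittagLeffler ν (w₂ * x ^ ν) :=
      monotone_mittagLeffler hν' (by gcongr)
    dsimp only
    gcongr
  have hcont : ContinuousAt (fun w : ℝ => max w 0 ^ ν⁻¹) y :=
    (continuousAt_id.max continuousAt_const).rpow_const (Or.inr (inv_nonneg.2 hν.1.le))
  simp only [one_div]
  exact (tendsto_prod_nhds_of_monotone hmono (tendsto_inv_mul_log_mittagLeffler hν) hcont).comp
    (hx.prodMk hg)

/-- Robust Mittag-Leffler limit: for `ν ∈ (0,1)`, if `x_t → ∞` and `g_t → y ∈ ℝ`, then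
`lim_{t→∞} (1/x_t) log E_ν(g_t x_t^ν) = (max(y,0))^{1/ν}`. -/
theorem stmt_19 (ν : ℝ) (hν : ν ∈ Set.Ioo (0 : ℝ) 1) (x g : ℝ → ℝ) (y : ℝ)
    (hx : Filter.Tendsto x Filter.atTop Filter.atTop)
    (hg : Filter.Tendsto g Filter.atTop (nhds y)) :
    Filter.Tendsto (fun t : ℝ => (1 / x t) * Real.log (mittagLeffler ν (g t * (x t) ^ ν)))
      Filter.atTop (nhds ((max y 0) ^ (1 / ν))) := by
  exact stmt_19_general hν hx hg
end
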